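/- arXiv:2508.21551 — 8 statements merged into one kernel-verified Lean document; each statement's English description precedes it below -/
import Mathlib

section
/- Let G be a graph, let D ⊆ V(G), and let ω, β1, β2, β3, β4 be positive reals satisfying ω ≥ β4 ≥ β3 ≥ β2 ≥ β1 > 0, ω + 5(ω−β4) ≥ 1, ω + 4(ω−β3) ≥ 1, and β4 + 5(ω−β3) ≥ 1. If in the isolation residual graph G_D^ι either some white vertex has at least 4 white neighbors, or some blue vertex has degree at least 5, then there exists a D-desirable set consisting of a single vertex. -/
open Classical

/-- The closed neighborhood `N[D]` of a set `D` of vertices. -/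
def closedNbhd {V : Type*} (G : SimpleGraph V) (D : Set V) : Set V :=
  {v | v ∈ D ∨ ∃ u ∈ D, G.Adj u v}

/-- `S` is an isolating set of `G`: deleting `N[S]` leaves no edge. -/
def IsIsolatingSet {V : Type*} (G : SimpleGraph V) (S : Set V) : Prop :=
  ∀ u v : V, G.Adj u v → u ∈ closedNbhd G S ∨ v ∈ closedNbhd G S

/-- The isolation number: the minimum cardinality of an isolating set. -/
noncomputable def isolationNumber {V : Type*} [Fintype V] (G : SimpleGraph V) : ℕ :=
  sInf {k | ∃ S : Set V, IsIsolatingSet G S ∧ S.ncard = k}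

/-- A vertex is white (w.r.t. `D`) if it lies outside `N[D]` and has a neighbor outside `N[D]`. -/
def IsWhite {V : Type*} (G : SimpleGraph V) (D : Set V) (v : V) : Prop :=
  v ∉ closedNbhd G D ∧ ∃ u, G.Adj v u ∧ u ∉ closedNbhd G D

/-- A vertex is blue (w.r.t. `D`) if it lies in `N[D]` and has a white neighbor. -/
def IsBlue {V : Type*} (G : SimpleGraph V) (D : Set V) (v : V) : Prop :=
  v ∈ closedNbhd G D ∧ ∃ u, G.Adj v u ∧ IsWhite G D u

/-- The isolation residual graph `G_D^ι`: its edges are the edges of `G` incident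
with at least one white vertex. -/
def residualGraph {V : Type*} (G : SimpleGraph V) (D : Set V) : SimpleGraph V where
  Adj u v := G.Adj u v ∧ (IsWhite G D u ∨ IsWhite G D v)
  symm := ⟨fun u v h => ⟨h.1.symm, h.2.symm⟩⟩
  loopless := ⟨fun v h => G.loopless.irrefl v h.1⟩

/-- The degree of a vertex in the isolation residual graph. -/
noncomputable def resDegree {V : Type*} (G : SimpleGraph V) (D : Set V) (v : V) : ℕ :=
  ((residualGraph G D).neighborSet v).ncard

/-- The number of white neighbors of a vertex. -/
noncomputable def whiteNbhdCount {V : Type*} (G : SimpleGraph V) (D : Set V) (v : V) : ℕ :=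
  {u | G.Adj v u ∧ IsWhite G D u}.ncard

/-- The weight of a vertex in the isolation residual graph. -/
noncomputable def vertexWeight {V : Type*} (G : SimpleGraph V) (D : Set V)
    (ω β1 β2 β3 β4 : ℝ) (v : V) : ℝ :=
  if IsWhite G D v then ω
  else if IsBlue G D v then
    if 4 ≤ resDegree G D v then β4
    else if resDegree G D v = 3 then β3
    else if resDegree G D v = 2 then β2
    else β1
  else 0

/-- The total weight `w(G_D^ι)` of the isolation residual graph. -/
noncomputable def totalWeight {V : Type*} [Fintype V] (G : SimpleGraph V) (D : Set V)
    (ω β1 β2 β3 β4 : ℝ) : ℝ :=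
  ∑ v : V, vertexWeight G D ω β1 β2 β3 β4 v

/-- `A ⊆ V(G) \ D` is `D`-desirable if the weight decrease from `D` to `D ∪ A`
is at least `|A|`. -/
def Desirable {V : Type*} [Fintype V] (G : SimpleGraph V) (ω β1 β2 β3 β4 : ℝ)
    (D A : Set V) : Prop :=
  A ⊆ Dᶜ ∧
    (A.ncard : ℝ) ≤ totalWeight G D ω β1 β2 β3 β4 - totalWeight G (D ∪ A) ω β1 β2 β3 β4

/-- `G` is alluring w.r.t. the weights if for every `D` that is not an isolating set
there exists a `D`-desirable set. -/
def Alluring {V : Type*} [Fintype V] (G : SimpleGraph V) (ω β1 β2 β3 β4 : ℝ) : Prop :=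
  ∀ D : Set V, ¬ IsIsolatingSet G D → ∃ A : Set V, Desirable G ω β1 β2 β3 β4 D A

/-- `C` is the vertex set of a connected component of the subgraph of `G_D^ι`
induced by the white vertices. -/
def IsWhiteComponent {V : Type*} (G : SimpleGraph V) (D : Set V) (C : Set V) : Prop :=
  C ⊆ {v | IsWhite G D v} ∧ (G.induce C).Connected ∧
    ∀ u ∈ C, ∀ v : V, IsWhite G D v → G.Adj u v → v ∈ C

section helpers
variable {V : Type*} [Fintype V] (G : SimpleGraph V) (D : Set V)

lemma cn_mono (a : V) {v : V} (h : v ∈ closedNbhd G D) : v ∈ closedNbhd G (D ∪ {a}) := by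
  rcases h with h | ⟨u, hu, h⟩
  · exact Or.inl (Or.inl h)
  · exact Or.inr ⟨u, Or.inl hu, h⟩

lemma white_of_white (a : V) {v : V} (h : IsWhite G (D ∪ {a}) v) : IsWhite G D v :=
  ⟨fun h' => h.1 (cn_mono G D a h'), h.2.imp fun _ hu => ⟨hu.1, fun h' => hu.2 (cn_mono G D a h')⟩⟩

lemma resDegree_nonwhite {v : V} (h : ¬ IsWhite G D v) :
    resDegree G D v = whiteNbhdCount G D v := by
  unfold resDegree whiteNbhdCount
  congr 1
  ext u
  simp [residualGraph, h]

lemma count_mono (a v : V) : whiteNbhdCount G (D ∪ {a}) v ≤ whiteNbhdCount G D v :=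
  Set.ncard_le_ncard (fun _ hu => ⟨hu.1, white_of_white G D a hu.2⟩) (Set.toFinite _)

lemma blue_notMem {v : V} (h : IsBlue G D v) : v ∉ D := by
  obtain ⟨-, u, huv, hu⟩ := h
  exact fun hv => hu.1 (Or.inr ⟨v, hv, huv⟩)

lemma blue_of_blue (a : V) {v : V} (h : IsBlue G (D ∪ {a}) v) (hw : ¬ IsWhite G D v) :
    IsBlue G D v := by
  obtain ⟨-, u, huv, hu⟩ := h
  have hu' := white_of_white G D a hu
  refine ⟨?_, u, huv, hu'⟩
  by_contra hc
  exact hw ⟨hc, u, huv, hu'.1⟩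

variable (ω β1 β2 β3 β4 : ℝ)
    (hm1 : ω ≥ β4) (hm2 : β4 ≥ β3) (hm3 : β3 ≥ β2) (hm4 : β2 ≥ β1) (hm5 : β1 > 0)

include hm2 hm3 hm4 hm5 in
lemma weight_nonwhite_le4 {v : V} (h : ¬ IsWhite G D v) :
    vertexWeight G D ω β1 β2 β3 β4 v ≤ β4 := by
  unfold vertexWeight
  split_ifs <;> linarith

include hm3 hm4 hm5 in
lemma weight_nonwhite_le3 {v : V} (h : ¬ IsWhite G D v) (hc : whiteNbhdCount G D v ≤ 3) :
    vertexWeight G D ω β1 β2 β3 β4 v ≤ β3 := by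
  rw [← resDegree_nonwhite G D h] at hc
  unfold vertexWeight
  split_ifs <;> first | omega | linarith

include hm1 hm2 hm3 hm4 hm5 in
lemma weight_mono (a v : V) : vertexWeight G (D ∪ {a}) ω β1 β2 β3 β4 v ≤
    vertexWeight G D ω β1 β2 β3 β4 v := by
  by_cases hw : IsWhite G D v
  · have : vertexWeight G D ω β1 β2 β3 β4 v = ω := by simp [vertexWeight, hw]
    rw [this]
    unfold vertexWeight
    split_ifs <;> linarith
  · have hw' : ¬ IsWhite G (D ∪ {a}) v := fun h => hw (white_of_white G D a h)
    by_cases hb' : IsBlue G (D ∪ {a}) v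
    · have hb := blue_of_blue G D a hb' hw
      have hc := count_mono G D a v
      simp only [vertexWeight, hw, hw', hb, hb', if_true, if_false,
        resDegree_nonwhite G D hw, resDegree_nonwhite G _ hw']
      split_ifs <;> first | omega | linarith | skip
      all_goals
        have h1 : 0 < whiteNbhdCount G (D ∪ {a}) v := by
          obtain ⟨-, u, hu⟩ := hb'
          exact (Set.ncard_pos (Set.toFinite _)).2 ⟨u, hu⟩
        omega
    · have : vertexWeight G (D ∪ {a}) ω β1 β2 β3 β4 v = 0 := by simp only [vertexWeight, hw', hb', if_false]
      rw [this]
      unfold vertexWeight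
      split_ifs <;> linarith

lemma not_white_new {a u : V} (h : a = u ∨ G.Adj a u) : ¬ IsWhite G (D ∪ {a}) u := by
  intro hw
  apply hw.1
  rcases h with rfl | h
  · exact Or.inl (Or.inr rfl)
  · exact Or.inr ⟨a, Or.inr rfl, h⟩

lemma weight_new (a : V) : vertexWeight G (D ∪ {a}) ω β1 β2 β3 β4 a = 0 := by
  have h1 := not_white_new G D (a := a) (Or.inl rfl)
  have h2 : ¬ IsBlue G (D ∪ {a}) a := by
    rintro ⟨-, u, hu, hw⟩
    exact not_white_new G D (Or.inr hu) hw
  simp only [vertexWeight, h1, h2, if_false]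

include hm1 hm2 hm3 hm4 hm5 in
lemma drop_ge (a : V) (ha : a ∉ D) (B : ℝ) (hB : B ≤ ω) (n : ℕ)
    (hn : n ≤ whiteNbhdCount G D a)
    (hS : ∀ u, G.Adj a u → IsWhite G D u → vertexWeight G (D ∪ {a}) ω β1 β2 β3 β4 u ≤ B)
    (h1 : 1 ≤ vertexWeight G D ω β1 β2 β3 β4 a + n * (ω - B)) :
    Desirable G ω β1 β2 β3 β4 D {a} := by
  refine ⟨by simpa using ha, ?_⟩
  rw [Set.ncard_singleton, totalWeight, totalWeight, ← Finset.sum_sub_distrib]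
  set f : V → ℝ := fun v => vertexWeight G D ω β1 β2 β3 β4 v -
    vertexWeight G (D ∪ {a}) ω β1 β2 β3 β4 v with hf
  let S : Finset V := Finset.univ.filter fun u => G.Adj a u ∧ IsWhite G D u
  have hcard : S.card = whiteNbhdCount G D a := by
    rw [whiteNbhdCount, Set.ncard_eq_toFinset_card']
    congr 1
    ext u
    simp [S]
  have haS : a ∉ S := by simp [S]
  have hsum : ∑ v ∈ insert a S, f v ≤ ∑ v, f v :=
    Finset.sum_le_sum_of_subset_of_nonneg (Finset.subset_univ _) fun v _ _ =>
      sub_nonneg.2 (weight_mono G D ω β1 β2 β3 β4 hm1 hm2 hm3 hm4 hm5 a v)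
  rw [Finset.sum_insert haS] at hsum
  have hS2 : S.card • (ω - B) ≤ ∑ v ∈ S, f v := by
    apply Finset.card_nsmul_le_sum
    intro u hu
    obtain ⟨hu1, hu2⟩ : G.Adj a u ∧ IsWhite G D u := by simpa [S] using hu
    have := hS u hu1 hu2
    have h3 : vertexWeight G D ω β1 β2 β3 β4 u = ω := by simp [vertexWeight, hu2]
    simp only [hf, h3]
    linarith
  have hfa : f a = vertexWeight G D ω β1 β2 β3 β4 a := by
    simp only [hf, weight_new, sub_zero]
  rw [nsmul_eq_mul, hcard] at hS2
  have hn' : (n : ℝ) * (ω - B) ≤ whiteNbhdCount G D a * (ω - B) :=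
    mul_le_mul_of_nonneg_right (by exact_mod_cast hn) (by linarith)
  push_cast
  linarith

end helpers

/-- Claim 1: if some white vertex has at least 4 white neighbors, or some blue vertex
has degree at least 5 in `G_D^ι`, then there is a singleton `D`-desirable set. -/
theorem exists_singleton_desirable_of_big {V : Type*} [Fintype V] (G : SimpleGraph V)
    (D : Set V) (ω β1 β2 β3 β4 : ℝ)
    (hm1 : ω ≥ β4) (hm2 : β4 ≥ β3) (hm3 : β3 ≥ β2) (hm4 : β2 ≥ β1) (hm5 : β1 > 0)
    (hc1a : ω + 5 * (ω - β4) ≥ 1)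
    (hc1b : ω + 4 * (ω - β3) ≥ 1)
    (hc1c : β4 + 5 * (ω - β3) ≥ 1)
    (h : (∃ v, IsWhite G D v ∧ 4 ≤ whiteNbhdCount G D v) ∨
         (∃ v, IsBlue G D v ∧ 5 ≤ resDegree G D v)) :
    ∃ a : V, Desirable G ω β1 β2 β3 β4 D {a} := by
  have key := drop_ge G D ω β1 β2 β3 β4 hm1 hm2 hm3 hm4 hm5
  have whiteD : ∀ v, IsWhite G D v → v ∉ D := fun v hv h => hv.1 (Or.inl h)
  have whiteW : ∀ v, IsWhite G D v → vertexWeight G D ω β1 β2 β3 β4 v = ω :=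
    fun v hv => by simp [vertexWeight, hv]
  by_cases h5 : ∃ v, IsWhite G D v ∧ 5 ≤ whiteNbhdCount G D v
  · obtain ⟨v, hv, hc⟩ := h5
    refine ⟨v, key v (whiteD v hv) β4 hm1 5 hc (fun u hu _ => ?_) ?_⟩
    · exact weight_nonwhite_le4 G _ ω β1 β2 β3 β4 hm2 hm3 hm4 hm5 (not_white_new G D (Or.inr hu))
    · rw [whiteW v hv]; push_cast; linarith
  push Not at h5
  by_cases h4 : ∃ v, IsWhite G D v ∧ 4 ≤ whiteNbhdCount G D v
  · obtain ⟨v, hv, hc⟩ := h4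
    refine ⟨v, key v (whiteD v hv) β3 (by linarith) 4 hc (fun u hu hw => ?_) ?_⟩
    · refine weight_nonwhite_le3 G _ ω β1 β2 β3 β4 hm3 hm4 hm5 (not_white_new G D (Or.inr hu)) ?_
      have h5u := h5 u hw
      have : whiteNbhdCount G (D ∪ {v}) u < whiteNbhdCount G D u := by
        apply Set.ncard_lt_ncard _ (Set.toFinite _)
        refine ⟨fun x hx => ⟨hx.1, white_of_white G D v hx.2⟩, fun hsub => ?_⟩
        exact not_white_new G D (Or.inl rfl) (hsub ⟨hu.symm, hv⟩).2
      omega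
    · rw [whiteW v hv]; push_cast; linarith
  rcases h with h | ⟨v, hb, hd⟩
  · exact absurd h h4
  push Not at h4
  have hnw : ¬ IsWhite G D v := fun hw => hw.1 hb.1
  have hd' := hd
  rw [resDegree_nonwhite G D hnw] at hd'
  refine ⟨v, key v (blue_notMem G D hb) β3 (by linarith) 5 hd' (fun u hu hw => ?_) ?_⟩
  · refine weight_nonwhite_le3 G _ ω β1 β2 β3 β4 hm3 hm4 hm5 (not_white_new G D (Or.inr hu)) ?_
    have := h4 u hw
    have := count_mono G D v u
    omega
  · have : vertexWeight G D ω β1 β2 β3 β4 v = β4 := by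
      simp [vertexWeight, hnw, hb, show 4 ≤ resDegree G D v by omega]
    rw [this]; push_cast; linarith
end

section
/- Let δ ≥ 3 be an integer, let G be a graph with minimum degree at least δ, let D ⊆ V(G), and let ω, β1, β2, β3, β4 be positive reals satisfying, with ε_i = β_i − β_{i−1} for i ∈ {2,3,4}: ω ≥ β4 ≥ β3 ≥ β2 ≥ β1 > 0, ε4 ≤ ε3 ≤ ε2 ≤ β1, ω + 3(ω−β2) + 4(δ−3)ε4 ≥ 1, and β4 + 4(ω−β2) + 4(δ−3)ε4 ≥ 1. Suppose in the isolation residual graph G_D^ι every white vertex has at most 3 white neighbors and every blue vertex has degree at most 4. If some white vertex has exactly 3 white neighbors or some blue vertex has degree exactly 4 in G_D^ι, then there exists a D-desirable set consisting of a single vertex. -/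
open Classical

noncomputable def fW (β1 β2 β3 β4 : ℝ) (d : ℕ) : ℝ :=
  if 4 ≤ d then β4 else if d = 3 then β3 else if d = 2 then β2 else if d = 1 then β1 else 0

theorem resDegree_eq_wc {V : Type*} (G : SimpleGraph V) (D : Set V) (v : V)
    (hv : ¬ IsWhite G D v) : resDegree G D v = whiteNbhdCount G D v := by
  unfold resDegree whiteNbhdCount
  congr 1
  ext u
  simp [residualGraph, SimpleGraph.neighborSet, hv]

theorem vertexWeight_eq {V : Type*} [Fintype V] (G : SimpleGraph V) (D : Set V)
    (ω β1 β2 β3 β4 : ℝ) (v : V) :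
    vertexWeight G D ω β1 β2 β3 β4 v =
      if IsWhite G D v then ω else fW β1 β2 β3 β4 (whiteNbhdCount G D v) := by
  unfold vertexWeight
  by_cases h1 : IsWhite G D v
  · rw [if_pos h1, if_pos h1]
  rw [if_neg h1, if_neg h1]
  by_cases h2 : IsBlue G D v
  · rw [if_pos h2, resDegree_eq_wc G D v h1]
    have : 0 < whiteNbhdCount G D v := by
      obtain ⟨u, hu⟩ := h2.2
      exact (Set.ncard_pos (Set.toFinite _)).2 ⟨u, hu⟩
    unfold fW
    split_ifs <;> first | rfl | omega
  · rw [if_neg h2]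
    have : whiteNbhdCount G D v = 0 := by
      unfold whiteNbhdCount
      rw [Set.ncard_eq_zero (Set.toFinite _)]
      ext u
      simp only [Set.mem_setOf_eq, Set.mem_empty_iff_false, iff_false]
      rintro ⟨hu, hw⟩
      by_cases hv : v ∈ closedNbhd G D
      · exact h2 ⟨hv, u, hu, hw⟩
      · exact h1 ⟨hv, u, hu, hw.1⟩
    rw [this]; simp [fW]

theorem closedNbhd_insert {V : Type*} (G : SimpleGraph V) (D : Set V) (a x : V) :
    x ∈ closedNbhd G (D ∪ {a}) ↔ x ∈ closedNbhd G D ∨ x = a ∨ G.Adj a x := by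
  simp only [closedNbhd, Set.mem_setOf_eq, Set.mem_union, Set.mem_singleton_iff]
  constructor
  · rintro ((h | h) | ⟨u, h | h, hu⟩)
    · tauto
    · tauto
    · exact Or.inl (Or.inr ⟨u, h, hu⟩)
    · subst h; tauto
  · rintro ((h | ⟨u, h, hu⟩) | h | h)
    · tauto
    · exact Or.inr ⟨u, Or.inl h, hu⟩
    · tauto
    · exact Or.inr ⟨a, Or.inr rfl, h⟩

theorem isWhite_insert {V : Type*} (G : SimpleGraph V) (D : Set V) (a x : V)
    (h : IsWhite G (D ∪ {a}) x) : IsWhite G D x ∧ x ≠ a ∧ ¬ G.Adj a x := by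
  obtain ⟨h1, u, hu, h2⟩ := h
  rw [closedNbhd_insert] at h1 h2
  push Not at h1 h2
  exact ⟨⟨h1.1, u, hu, h2.1⟩, h1.2⟩

theorem fW_le {ω β1 β2 β3 β4 : ℝ} 
    (hm1 : ω ≥ β4) (hm2 : β4 ≥ β3) (hm3 : β3 ≥ β2) (hm4 : β2 ≥ β1) (hm5 : β1 > 0) (d : ℕ) :
    fW β1 β2 β3 β4 d ≤ ω := by
  unfold fW
  split_ifs <;> linarith

theorem fW_two {β1 β2 β3 β4 : ℝ} (hm4 : β2 ≥ β1) (hm5 : β1 > 0) (d : ℕ) (hd : d ≤ 2) :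
    fW β1 β2 β3 β4 d ≤ β2 := by
  unfold fW
  split_ifs <;> first | omega | linarith

theorem fW_diff {β1 β2 β3 β4 : ℝ} (hm2 : β4 ≥ β3) 
    (he1 : β4 - β3 ≤ β3 - β2) (he2 : β3 - β2 ≤ β2 - β1) (he3 : β2 - β1 ≤ β1)
    (d e k : ℕ) (hd : d ≤ 4) (h : e + k ≤ d) :
    (β4 - β3) * k ≤ fW β1 β2 β3 β4 d - fW β1 β2 β3 β4 e := by
  have hk : k ≤ 4 := by omega
  have he : e ≤ 4 := by omega
  interval_cases d <;> interval_cases e <;> interval_cases k <;>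
    first | omega | (simp [fW]; try linarith)

theorem wc_eq {V : Type*} [Fintype V] (G : SimpleGraph V) (D : Set V) (v : V) :
    whiteNbhdCount G D v = (Finset.univ.filter fun u => G.Adj v u ∧ IsWhite G D u).card := by
  unfold whiteNbhdCount
  rw [← Set.ncard_coe_finset]
  congr 1
  ext; simp

theorem key_bound {V : Type*} [Fintype V] (G : SimpleGraph V) (D : Set V) (a : V)
    (ω β1 β2 β3 β4 : ℝ) (S : Finset V) (m : ℕ)
    (hm1 : ω ≥ β4) (hm2 : β4 ≥ β3) (hm3 : β3 ≥ β2) (hm4 : β2 ≥ β1) (hm5 : β1 > 0)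
    (he1 : β4 - β3 ≤ β3 - β2) (he2 : β3 - β2 ≤ β2 - β1) (he3 : β2 - β1 ≤ β1)
    (hB : ∀ v, ¬ IsWhite G D v → whiteNbhdCount G D v ≤ 4)
    (hS : ∀ s ∈ S, IsWhite G D s ∧ (s = a ∨ G.Adj a s))
    (hS2 : ∀ s ∈ S, s ≠ a → whiteNbhdCount G (D ∪ {a}) s ≤ 2)
    (hSm : ∀ s ∈ S, m ≤ (Finset.univ.filter
      fun x => (¬ IsWhite G D x ∧ x ≠ a) ∧ G.Adj x s).card) :
    vertexWeight G D ω β1 β2 β3 β4 a + (S.erase a).card * (ω - β2) + S.card * m * (β4 - β3) ≤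
    totalWeight G D ω β1 β2 β3 β4 - totalWeight G (D ∪ {a}) ω β1 β2 β3 β4 := by
  have hpt : ∀ x, (if x = a then vertexWeight G D ω β1 β2 β3 β4 a else 0)
      + (if x ∈ S.erase a then ω - β2 else 0)
      + (if ¬ IsWhite G D x ∧ x ≠ a then
          (β4 - β3) * ((S.filter fun s => G.Adj x s).card : ℝ) else 0)
      ≤ vertexWeight G D ω β1 β2 β3 β4 x - vertexWeight G (D ∪ {a}) ω β1 β2 β3 β4 x := by
    intro x
    by_cases hxa : x = a
    · subst hxa
      have h1 : ¬ IsWhite G (D ∪ {x}) x := fun h => (isWhite_insert G D x x h).2.1 rfl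
      have h2 : whiteNbhdCount G (D ∪ {x}) x = 0 := by
        rw [wc_eq, Finset.card_eq_zero, Finset.filter_eq_empty_iff]
        rintro u - ⟨h, h'⟩
        exact (isWhite_insert G D x u h').2.2 h
      rw [vertexWeight_eq G (D ∪ {x}), if_neg h1, h2]
      simp [fW]
    by_cases hw : IsWhite G D x
    · by_cases hxS : x ∈ S
      · have h1 : ¬ IsWhite G (D ∪ {a}) x := fun h => by
          have := isWhite_insert G D a x h
          have := hS x hxS
          tauto
        have := fW_two (β3 := β3) (β4 := β4) hm4 hm5 _ (hS2 x hxS hxa)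
        rw [vertexWeight_eq G D ω β1 β2 β3 β4 x, vertexWeight_eq G (D ∪ {a}), if_pos hw, if_neg h1]
        simp [hxa, hxS, hw, -Set.union_singleton]
        linarith
      · have := fW_le hm1 hm2 hm3 hm4 hm5 (whiteNbhdCount G (D ∪ {a}) x)
        rw [vertexWeight_eq G D ω β1 β2 β3 β4 x, vertexWeight_eq G (D ∪ {a}), if_pos hw]
        simp [hxa, hxS, hw, -Set.union_singleton]
        split_ifs <;> linarith
    · have hxS : x ∉ S := fun h => hw (hS x h).1
      have h1 : ¬ IsWhite G (D ∪ {a}) x := fun h => hw (isWhite_insert G D a x h).1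
      rw [vertexWeight_eq G D ω β1 β2 β3 β4 x, vertexWeight_eq G (D ∪ {a}), if_neg hw, if_neg h1]
      have := fW_diff hm2 he1 he2 he3 (whiteNbhdCount G D x) (whiteNbhdCount G (D ∪ {a}) x)
        (S.filter fun s => G.Adj x s).card (hB x hw) (by
          rw [wc_eq, wc_eq, ← Finset.card_union_of_disjoint]
          · apply Finset.card_le_card
            intro u hu
            simp only [Finset.mem_union, Finset.mem_filter, Finset.mem_univ, true_and] at hu ⊢
            rcases hu with hu | hu
            · exact ⟨hu.1, (isWhite_insert G D a u hu.2).1⟩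
            · exact ⟨hu.2, (hS u hu.1).1⟩
          · rw [Finset.disjoint_left]
            intro u hu hu'
            simp only [Finset.mem_filter, Finset.mem_univ, true_and] at hu hu'
            have := isWhite_insert G D a u hu.2
            have := hS u hu'.1
            tauto)
      simpa [hxa, hxS, hw] using this
  have hsum := Finset.sum_le_sum fun x (_ : x ∈ Finset.univ) => hpt x
  rw [Finset.sum_sub_distrib, Finset.sum_add_distrib, Finset.sum_add_distrib] at hsum
  have e1 : ∑ x : V, (if x = a then vertexWeight G D ω β1 β2 β3 β4 a else 0)
      = vertexWeight G D ω β1 β2 β3 β4 a := by simp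
  have e2 : ∑ x : V, (if x ∈ S.erase a then ω - β2 else 0) = (S.erase a).card * (ω - β2) := by
    rw [Finset.sum_ite_mem, Finset.univ_inter, Finset.sum_const, nsmul_eq_mul]
  have e3 : (S.card * m * (β4 - β3) : ℝ) ≤ ∑ x : V, (if ¬ IsWhite G D x ∧ x ≠ a then
          (β4 - β3) * ((S.filter fun s => G.Adj x s).card : ℝ) else 0) := by
    have hc : S.card * m ≤ ∑ x ∈ Finset.univ.filter (fun x => ¬ IsWhite G D x ∧ x ≠ a),
        (S.filter fun s => G.Adj x s).card := by
      have := Finset.sum_card_bipartiteAbove_eq_sum_card_bipartiteBelow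
        (s := Finset.univ.filter (fun x => ¬ IsWhite G D x ∧ x ≠ a)) (t := S) (fun x s => G.Adj x s)
      unfold Finset.bipartiteAbove Finset.bipartiteBelow at this
      rw [this, ← smul_eq_mul]
      apply Finset.card_nsmul_le_sum
      intro s hs
      rw [Finset.filter_filter]
      exact hSm s hs
    rw [← Finset.sum_filter, ← Finset.mul_sum, mul_comm]
    apply mul_le_mul_of_nonneg_left _ (by linarith)
    exact_mod_cast hc
  rw [e1, e2] at hsum
  unfold totalWeight
  linarith

theorem nonwhite_count {V : Type*} [Fintype V] (G : SimpleGraph V) (D : Set V) (s : V) (δ k : ℕ)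
    (hmin : δ ≤ (G.neighborSet s).ncard) (P : V → Prop)
    (hP : (Finset.univ.filter fun x => G.Adj s x ∧ ¬ P x).card ≤ k) :
    δ - k ≤ (Finset.univ.filter fun x => P x ∧ G.Adj x s).card := by
  have h1 : (G.neighborSet s).ncard = (Finset.univ.filter fun x => G.Adj s x).card := by
    rw [← Set.ncard_coe_finset]
    congr 1
    ext; simp
  have h2 : (Finset.univ.filter fun x => G.Adj s x).card ≤
      (Finset.univ.filter fun x => G.Adj s x ∧ ¬ P x).card +
      (Finset.univ.filter fun x => P x ∧ G.Adj x s).card := by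
    refine le_trans (Finset.card_le_card ?_) (Finset.card_union_le _ _)
    intro x hx
    simp only [Finset.mem_union, Finset.mem_filter, Finset.mem_univ, true_and, G.adj_comm x s]
      at hx ⊢
    tauto
  omega

/-- Claim 2: under the degree assumptions, if some white vertex has exactly 3 white
neighbors or some blue vertex has degree exactly 4 in `G_D^ι`, then there is a
singleton `D`-desirable set. -/
theorem exists_singleton_desirable_of_small (δ : ℕ) (hδ : 3 ≤ δ)
    {V : Type*} [Fintype V] (G : SimpleGraph V)
    (hmin : ∀ v : V, δ ≤ (G.neighborSet v).ncard) (D : Set V) (ω β1 β2 β3 β4 : ℝ)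
    (hm1 : ω ≥ β4) (hm2 : β4 ≥ β3) (hm3 : β3 ≥ β2) (hm4 : β2 ≥ β1) (hm5 : β1 > 0)
    (he1 : β4 - β3 ≤ β3 - β2) (he2 : β3 - β2 ≤ β2 - β1) (he3 : β2 - β1 ≤ β1)
    (hc2a : ω + 3 * (ω - β2) + 4 * ((δ : ℝ) - 3) * (β4 - β3) ≥ 1)
    (hc2b : β4 + 4 * (ω - β2) + 4 * ((δ : ℝ) - 3) * (β4 - β3) ≥ 1)
    (hW : ∀ v, IsWhite G D v → whiteNbhdCount G D v ≤ 3)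
    (hB : ∀ v, IsBlue G D v → resDegree G D v ≤ 4)
    (h : (∃ v, IsWhite G D v ∧ whiteNbhdCount G D v = 3) ∨
         (∃ v, IsBlue G D v ∧ resDegree G D v = 4)) :
    ∃ a : V, Desirable G ω β1 β2 β3 β4 D {a} := by
  have hB' : ∀ v, ¬ IsWhite G D v → whiteNbhdCount G D v ≤ 4 := by
    intro v hv
    by_cases hb : IsBlue G D v
    · rw [← resDegree_eq_wc G D v hv]; exact hB v hb
    · by_contra hcon
      have : 0 < whiteNbhdCount G D v := by omega
      obtain ⟨u, hu, hw⟩ := (Set.ncard_pos (Set.toFinite _)).1 this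
      by_cases hvc : v ∈ closedNbhd G D
      · exact hb ⟨hvc, u, hu, hw⟩
      · exact hv ⟨hvc, u, hu, hw.1⟩
  have hcast : ((δ - 3 : ℕ) : ℝ) = (δ : ℝ) - 3 := by push_cast [hδ]; rfl
  by_cases h3 : ∃ v, IsWhite G D v ∧ whiteNbhdCount G D v = 3
  · obtain ⟨a, ha, ha3⟩ := h3
    refine ⟨a, ?_, ?_⟩
    · rintro x rfl hx
      exact ha.1 (Or.inl hx)
    have hna : a ∉ (Finset.univ.filter fun u => G.Adj a u ∧ IsWhite G D u) := by simp
    have := key_bound G D a ω β1 β2 β3 β4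
      (insert a (Finset.univ.filter fun u => G.Adj a u ∧ IsWhite G D u)) (δ - 3)
      hm1 hm2 hm3 hm4 hm5 he1 he2 he3 hB'
      (by
        intro s hs
        simp only [Finset.mem_insert, Finset.mem_filter, Finset.mem_univ, true_and] at hs
        rcases hs with rfl | hs
        · exact ⟨ha, Or.inl rfl⟩
        · exact ⟨hs.2, Or.inr hs.1⟩)
      (by
        intro s hs hsa
        simp only [Finset.mem_insert, Finset.mem_filter, Finset.mem_univ, true_and] at hs
        replace hs := hs.resolve_left hsa
        have h1 := hW s hs.2
        have h2 : whiteNbhdCount G (D ∪ {a}) s < whiteNbhdCount G D s := by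
          rw [wc_eq, wc_eq]
          apply Finset.card_lt_card
          rw [Finset.ssubset_iff_of_subset]
          · refine ⟨a, by simp [hs.1.symm, ha], ?_⟩
            simp only [Finset.mem_filter, not_and]
            intro _ _ hh
            exact (isWhite_insert G D a a hh).2.1 rfl
          · intro u hu
            simp only [Finset.mem_filter, Finset.mem_univ, true_and] at hu ⊢
            exact ⟨hu.1, (isWhite_insert G D a u hu.2).1⟩
        omega)
      (by
        intro s hs
        have hsw : IsWhite G D s := by
          simp only [Finset.mem_insert, Finset.mem_filter, Finset.mem_univ, true_and] at hs
          rcases hs with rfl | hs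
          · exact ha
          · exact hs.2
        refine le_trans (nonwhite_count G D s δ 3 (hmin s)
          (fun x => ¬ IsWhite G D x ∧ x ≠ a) ?_) (le_of_eq (by congr))
        refine le_trans (Finset.card_le_card ?_) ((wc_eq G D s).symm.trans_le (hW s hsw))
        intro u hu
        simp only [Finset.mem_filter, Finset.mem_univ, true_and] at hu ⊢
        refine ⟨hu.1, ?_⟩
        by_contra hc
        apply hu.2
        refine ⟨hc, ?_⟩
        rintro rfl
        exact hc ha)
    rw [Finset.erase_insert hna, Finset.card_insert_of_notMem hna, ← wc_eq, ha3, hcast,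
      vertexWeight_eq, if_pos ha] at this
    rw [Set.ncard_singleton]
    push_cast at this ⊢
    linarith
  · obtain ⟨a, ha, ha4⟩ := h.resolve_left h3
    have haw : ¬ IsWhite G D a := fun hh => hh.1 ha.1
    rw [resDegree_eq_wc G D a haw] at ha4
    have hW2 : ∀ v, IsWhite G D v → whiteNbhdCount G D v ≤ 2 := by
      intro v hv
      have h1 := hW v hv
      have h2 : whiteNbhdCount G D v ≠ 3 := fun hh => h3 ⟨v, hv, hh⟩
      omega
    refine ⟨a, ?_, ?_⟩
    · rintro x rfl hx
      obtain ⟨-, u, hu, hw⟩ := ha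
      exact hw.1 (Or.inr ⟨x, hx, hu⟩)
    have hna : a ∉ (Finset.univ.filter fun u => G.Adj a u ∧ IsWhite G D u) := by simp
    have := key_bound G D a ω β1 β2 β3 β4
      (Finset.univ.filter fun u => G.Adj a u ∧ IsWhite G D u) (δ - 3)
      hm1 hm2 hm3 hm4 hm5 he1 he2 he3 hB'
      (by
        intro s hs
        simp only [Finset.mem_filter, Finset.mem_univ, true_and] at hs
        exact ⟨hs.2, Or.inr hs.1⟩)
      (by
        intro s hs hsa
        simp only [Finset.mem_filter, Finset.mem_univ, true_and] at hs
        refine le_trans ?_ (hW2 s hs.2)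
        rw [wc_eq, wc_eq]
        apply Finset.card_le_card
        intro u hu
        simp only [Finset.mem_filter, Finset.mem_univ, true_and] at hu ⊢
        exact ⟨hu.1, (isWhite_insert G D a u hu.2).1⟩)
      (by
        intro s hs
        simp only [Finset.mem_filter, Finset.mem_univ, true_and] at hs
        refine le_trans (nonwhite_count G D s δ 3 (hmin s)
          (fun x => ¬ IsWhite G D x ∧ x ≠ a) ?_) (le_of_eq (by congr))
        have h2 := hW2 s hs.2
        rw [wc_eq] at h2
        refine le_trans (Finset.card_le_card (t := insert a
          (Finset.univ.filter fun u => G.Adj s u ∧ IsWhite G D u)) ?_)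
          ((Finset.card_insert_le _ _).trans (by omega))
        intro u hu
        simp only [Finset.mem_insert, Finset.mem_filter, Finset.mem_univ, true_and] at hu ⊢
        tauto)
    rw [Finset.erase_eq_of_notMem hna, ← wc_eq, ha4, hcast,
      vertexWeight_eq, if_neg haw, ha4] at this
    rw [Set.ncard_singleton]
    simp only [fW, le_refl, if_true] at this
    push_cast at this ⊢
    linarith
end

section
/- Let δ ≥ 3 be an integer, let G be a graph with minimum degree at least δ, let D ⊆ V(G), and let ω, β1, β2, β3, β4 be positive reals satisfying, with ε_i = β_i − β_{i−1} for i ∈ {2,3,4}: ω ≥ β4 ≥ β3 ≥ β2 ≥ β1 > 0, ε4 ≤ ε3 ≤ ε2 ≤ β1, and ω + (δ−2)ε3 ≥ 1/3. Suppose in the isolation residual graph G_D^ι every white vertex has at most 2 white neighbors and every blue vertex has degree at most 3. If some connected component F of the subgraph of G_D^ι induced by the white vertices is isomorphic to neither K_2 nor the 5-cycle C_5, then every minimum isolating set of F is a D-desirable set. -/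
open Classical

def PathFn {W : Type*} (H : SimpleGraph W) (k : ℕ) (f : ℕ → W) : Prop :=
  (∀ i j, i < k → j < k → f i = f j → i = j) ∧ ∀ i, i + 1 < k → H.Adj (f i) (f (i + 1))

lemma exists_hamPath {W : Type*} [Finite W] (H : SimpleGraph W) (hconn : H.Connected)
    (hdeg : ∀ v a b c, H.Adj v a → H.Adj v b → H.Adj v c → a = b ∨ a = c ∨ b = c) :
    ∃ (k : ℕ) (f : ℕ → W), PathFn H k f ∧ (∀ v, ∃ i, i < k ∧ f i = v) ∧ Nat.card W = k := by
  have hbd : ∀ k f, PathFn H k f → k ≤ Nat.card W := by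
    intro k f hf
    have hinj : Function.Injective (fun i : Fin k => f i) := by
      intro i j h
      exact Fin.ext (hf.1 i j i.2 j.2 h)
    simpa using Nat.card_le_card_of_injective _ hinj
  obtain ⟨w⟩ := hconn.nonempty
  have h1 : ∃ f, PathFn H 1 f := ⟨fun _ => w, by intro i j; omega, by intro i; omega⟩
  obtain ⟨k, ⟨f, hf⟩, hk1, hmax⟩ : ∃ k, (∃ f, PathFn H k f) ∧ 1 ≤ k ∧
      ∀ k', (∃ f, PathFn H k' f) → k' ≤ k := by
    classical
    have hc : 1 ≤ Nat.card W := by obtain ⟨f, hf⟩ := h1; exact hbd 1 f hf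
    refine ⟨Nat.findGreatest (fun k => ∃ f, PathFn H k f) (Nat.card W), ?_, ?_, ?_⟩
    · exact Nat.findGreatest_spec (P := fun k => ∃ f, PathFn H k f) hc h1
    · exact Nat.le_findGreatest hc h1
    · rintro k' ⟨f, hf⟩
      exact Nat.le_findGreatest (hbd _ _ hf) ⟨f, hf⟩
  have hsurj : ∀ v, ∃ i, i < k ∧ f i = v := by
    by_contra! hcon
    obtain ⟨v, hv⟩ := hcon
    obtain ⟨p⟩ := hconn.preconnected (f 0) v
    obtain ⟨d, -, ⟨i, hi, hid⟩, hd2⟩ := p.exists_boundary_dart {x | ∃ i, i < k ∧ f i = x}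
      ⟨0, by omega, rfl⟩ (by rintro ⟨i, hi, h⟩; exact hv i hi h)
    have hadj : H.Adj (f i) d.snd := hid ▸ d.adj
    have hy : ∀ j, j < k → f j ≠ d.snd := fun j hj h => hd2 ⟨j, hj, h⟩
    generalize d.snd = y at hadj hy
    by_cases hi0 : i = 0
    · have := hmax (k + 1) ⟨fun j => match j with | 0 => y | j + 1 => f j, by
        constructor
        · rintro (_ | a) (_ | b) ha hb h
          · rfl
          · exact absurd h.symm (hy b (by omega))
          · exact absurd h (hy a (by omega))
          · simp only [hf.1 a b (by omega) (by omega) h]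
        · rintro (_ | a) ha
          · subst hi0; exact hadj.symm
          · exact hf.2 a (by omega)⟩
      omega
    by_cases hik : i + 1 = k
    · have := hmax (k + 1) ⟨fun j => if j = k then y else f j, by
        constructor
        · intro a b ha hb h
          by_cases hak : a = k <;> by_cases hbk : b = k <;> simp only [hak, hbk, if_true, if_false] at h
          · omega
          · exact absurd h.symm (hy b (by omega))
          · exact absurd h (hy a (by omega))
          · exact hf.1 a b (by omega) (by omega) h
        · intro a ha
          by_cases hak : a + 1 = k
          · have : a ≠ k := by omega
            have h2 : a = i := by omega
            simp only [hak, this, if_true, if_false]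
            exact h2 ▸ hadj
          · have : a ≠ k := by omega
            simp only [hak, this, if_false]
            exact hf.2 a (by omega)⟩
      omega
    · obtain ⟨i, rfl⟩ : ∃ j, i = j + 1 := ⟨i - 1, by omega⟩
      rcases hdeg (f (i+1)) (f i) (f (i+1+1)) y (hf.2 i (by omega)).symm (hf.2 (i+1) (by omega)) hadj
        with h | h | h
      · have := hf.1 _ _ (by omega) (by omega) h
        omega
      · exact hy _ (by omega) h
      · exact hy _ (by omega) h
  refine ⟨k, f, hf, hsurj, le_antisymm ?_ (hbd k f hf)⟩
  have : Function.Surjective (fun i : Fin k => f i) := by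
    intro v
    obtain ⟨i, hi, h⟩ := hsurj v
    exact ⟨⟨i, hi⟩, h⟩
  simpa using Nat.card_le_card_of_surjective _ this

lemma exists_small_isolating {W : Type*} [Finite W] (H : SimpleGraph W) (hconn : H.Connected)
    (hdeg : ∀ v a b c, H.Adj v a → H.Adj v b → H.Adj v c → a = b ∨ a = c ∨ b = c)
    (hnb : ∀ v, ∃ u, H.Adj v u)
    (hK2 : ¬ Nonempty (H ≃g (⊤ : SimpleGraph (Fin 2))))
    (hC5 : ¬ Nonempty (H ≃g SimpleGraph.cycleGraph 5)) :
    ∃ T : Set W, IsIsolatingSet H T ∧ 3 * T.ncard ≤ Nat.card W := by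
  obtain ⟨k, f, hf, hsurj, hcard⟩ := exists_hamPath H hconn hdeg
  have hedge : ∀ i j, i < j → j < k → H.Adj (f i) (f j) → j = i + 1 ∨ (i = 0 ∧ j + 1 = k) := by
    intro i j hij hj hadj
    by_contra! hcon
    obtain ⟨hc1, hc2⟩ := hcon
    by_cases hi : i = 0
    · subst hi
      have hjk := hc2 rfl
      obtain ⟨j, rfl⟩ : ∃ j', j = j' + 1 := ⟨j - 1, by omega⟩
      rcases hdeg (f (j+1)) (f j) (f (j+1+1)) (f 0) (hf.2 j (by omega)).symm (hf.2 (j+1) (by omega))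
        hadj.symm with h | h | h <;>
      · have := hf.1 _ _ (by omega) (by omega) h
        omega
    · obtain ⟨i, rfl⟩ : ∃ j', i = j' + 1 := ⟨i - 1, by omega⟩
      rcases hdeg (f (i+1)) (f i) (f (i+1+1)) (f j) (hf.2 i (by omega)).symm (hf.2 (i+1) (by omega))
        hadj with h | h | h <;>
      · have := hf.1 _ _ (by omega) (by omega) h
        omega
  have hk2 : 2 ≤ k := by
    obtain ⟨w⟩ := hconn.nonempty
    obtain ⟨u, hu⟩ := hnb w
    obtain ⟨i, hi, rfl⟩ := hsurj w
    obtain ⟨j, hj, rfl⟩ := hsurj u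
    have : i ≠ j := by rintro rfl; exact H.loopless.irrefl _ hu
    omega
  have hbij : Function.Bijective (fun i : Fin k => f i) := by
    constructor
    · intro i j h
      exact Fin.ext (hf.1 i j i.2 j.2 h)
    · intro v
      obtain ⟨i, hi, h⟩ := hsurj v
      exact ⟨⟨i, hi⟩, h⟩
  have hkn2 : k ≠ 2 := by
    rintro rfl
    apply hK2
    refine ⟨(RelIso.symm ⟨Equiv.ofBijective _ hbij, ?_⟩)⟩
    have h01 := hf.2 0 (by omega)
    intro a b
    fin_cases a <;> fin_cases b <;> simp [h01, h01.symm] <;> simpa using h01.symm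
  have wlogE : ∀ T : Set W, (∀ i j, i < j → j < k → H.Adj (f i) (f j) →
      f i ∈ closedNbhd H T ∨ f j ∈ closedNbhd H T) → IsIsolatingSet H T := by
    intro T h u v huv
    obtain ⟨i, hi, rfl⟩ := hsurj u
    obtain ⟨j, hj, rfl⟩ := hsurj v
    rcases lt_trichotomy i j with hij | hij | hij
    · exact h i j hij hj huv
    · subst hij; exact absurd huv (H.loopless.irrefl _)
    · exact (h j i hij hi huv.symm).symm
  by_cases hk5 : k = 5
  · subst hk5
    have h04 : ¬ H.Adj (f 0) (f 4) := by
      intro h04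
      apply hC5
      refine ⟨(RelIso.symm ⟨Equiv.ofBijective _ hbij, ?_⟩)⟩
      have h01 := hf.2 0 (by omega)
      have h12 := hf.2 1 (by omega)
      have h23 := hf.2 2 (by omega)
      have h34 := hf.2 3 (by omega)
      have h02 : ¬ H.Adj (f 0) (f 2) := fun h => by have := hedge 0 2 (by omega) (by omega) h; omega
      have h03 : ¬ H.Adj (f 0) (f 3) := fun h => by have := hedge 0 3 (by omega) (by omega) h; omega
      have h13 : ¬ H.Adj (f 1) (f 3) := fun h => by have := hedge 1 3 (by omega) (by omega) h; omega
      have h14 : ¬ H.Adj (f 1) (f 4) := fun h => by have := hedge 1 4 (by omega) (by omega) h; omega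
      have h24 : ¬ H.Adj (f 2) (f 4) := fun h => by have := hedge 2 4 (by omega) (by omega) h; omega
      have key : ∀ a b : Fin 5, H.Adj (f a) (f b) ↔ (SimpleGraph.cycleGraph 5).Adj a b := by
        intro a b
        rw [SimpleGraph.cycleGraph_adj]
        fin_cases a <;> fin_cases b <;>
          first
          | exact iff_of_true (by first | assumption | exact SimpleGraph.Adj.symm (by assumption)) (by decide)
          | exact iff_of_false (by first | assumption | exact fun h => absurd h.symm (by assumption)
                                         | exact H.loopless.irrefl _) (by decide)
      intro a b
      exact key a b
    refine ⟨{f 2}, wlogE _ ?_, by simp [hcard]⟩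
    have hcov : ∀ i, 1 ≤ i → i ≤ 3 → f i ∈ closedNbhd H {f 2} := by
      intro i h1 h3
      interval_cases i
      · right; exact ⟨f 2, rfl, (hf.2 1 (by omega)).symm⟩
      · left; rfl
      · right; exact ⟨f 2, rfl, (hf.2 2 (by omega))⟩
    intro i j hij hj hadj
    by_cases hi : 1 ≤ i
    · left; exact hcov i hi (by omega)
    · right
      apply hcov j (by omega)
      by_contra hj3
      have e1 : i = 0 := by omega
      have e2 : j = 4 := by omega
      subst e1 e2
      exact h04 hadj
  · refine ⟨(fun j => f (min (4 * j + 1) (k - 1))) '' (Set.Iio ((k + 3) / 4)), wlogE _ ?_, ?_⟩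
    · have hcov : ∀ i, i < k → i % 4 ≠ 3 →
          f i ∈ closedNbhd H ((fun j => f (min (4 * j + 1) (k - 1))) '' (Set.Iio ((k + 3) / 4))) := by
        intro i hi hi3
        have hmem : f (min (4 * (i/4) + 1) (k - 1)) ∈
          (fun j => f (min (4 * j + 1) (k - 1))) '' (Set.Iio ((k + 3) / 4)) :=
          ⟨i/4, by simp only [Set.mem_Iio]; omega, rfl⟩
        generalize hm : min (4 * (i/4) + 1) (k - 1) = m at hmem
        have : m = i ∨ m = i + 1 ∨ i = m + 1 := by omega
        have hmk : m < k := by omega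
        rcases this with rfl | rfl | rfl
        · left; exact hmem
        · right; exact ⟨_, hmem, (hf.2 i hmk).symm⟩
        · right; exact ⟨_, hmem, hf.2 m hi⟩
      intro i j hij hj hadj
      have := hedge i j hij hj hadj
      by_cases hi : i % 4 = 3
      · right; exact hcov j hj (by omega)
      · left; exact hcov i (by omega) hi
    · have := Set.ncard_image_le (f := fun j => f (min (4 * j + 1) (k - 1)))
        (Set.finite_Iio ((k + 3) / 4))
      rw [Set.ncard_eq_toFinset_card' (Set.Iio _)] at this
      simp at this
      omega

/-- Claim 3: under the degree assumptions, if some white component `C` is neither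
`K₂` nor `C₅`, then every minimum isolating set of the induced subgraph on `C`
is a `D`-desirable set. -/
theorem minimum_isolating_set_of_component_desirable (δ : ℕ) (hδ : 3 ≤ δ)
    {V : Type*} [Fintype V] (G : SimpleGraph V)
    (hmin : ∀ v : V, δ ≤ (G.neighborSet v).ncard) (D : Set V) (ω β1 β2 β3 β4 : ℝ)
    (hm1 : ω ≥ β4) (hm2 : β4 ≥ β3) (hm3 : β3 ≥ β2) (hm4 : β2 ≥ β1) (hm5 : β1 > 0)
    (he1 : β4 - β3 ≤ β3 - β2) (he2 : β3 - β2 ≤ β2 - β1) (he3 : β2 - β1 ≤ β1)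
    (hc3 : ω + ((δ : ℝ) - 2) * (β3 - β2) ≥ 1 / 3)
    (hW : ∀ v, IsWhite G D v → whiteNbhdCount G D v ≤ 2)
    (hB : ∀ v, IsBlue G D v → resDegree G D v ≤ 3)
    (C : Set V) (hC : IsWhiteComponent G D C)
    (hK2 : ¬ Nonempty (G.induce C ≃g (⊤ : SimpleGraph (Fin 2))))
    (hC5 : ¬ Nonempty (G.induce C ≃g SimpleGraph.cycleGraph 5)) :
    ∀ S : Set ↥C, IsIsolatingSet (G.induce C) S →
      (∀ T : Set ↥C, IsIsolatingSet (G.induce C) T → S.ncard ≤ T.ncard) →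
      Desirable G ω β1 β2 β3 β4 D (Subtype.val '' S) := by
  intro S hS hSmin
  obtain ⟨hCw, hconn, hCcl⟩ := hC
  have hCW : ∀ v ∈ C, IsWhite G D v := fun v hv => hCw hv
  -- cardinality bound
  have hcardS : 3 * S.ncard ≤ C.ncard := by
    obtain ⟨T, hT, hT3⟩ := exists_small_isolating (G.induce C) hconn
      (by
        rintro ⟨v, hv⟩ ⟨a, ha⟩ ⟨b, hb⟩ ⟨c, hc⟩ h1 h2 h3
        by_contra! hne
        obtain ⟨n1, n2, n3⟩ := hne
        have h2' := hW v (hCW v hv)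
        have hsub : ({a, b, c} : Set V) ⊆ {u | G.Adj v u ∧ IsWhite G D u} := by
          rintro x (rfl | rfl | rfl)
          · exact ⟨h1, hCW _ ha⟩
          · exact ⟨h2, hCW _ hb⟩
          · exact ⟨h3, hCW _ hc⟩
        have h3' := Set.ncard_le_ncard hsub (Set.toFinite _)
        have : ({a, b, c} : Set V).ncard = 3 := by
          rw [Set.ncard_eq_three]
          exact ⟨a, b, c, by simpa using n1, by simpa using n2, by simpa using n3, rfl⟩
        unfold whiteNbhdCount at h2'
        omega)
      (by
        rintro ⟨v, hv⟩
        obtain ⟨h1, u, hu, hu2⟩ := hCW v hv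
        exact ⟨⟨u, hCcl v hv u ⟨hu2, v, hu.symm, h1⟩ hu⟩, hu⟩) hK2 hC5
    have := hSmin T hT
    rw [Nat.card_coe_set_eq] at hT3
    omega
  set A : Set V := Subtype.val '' S with hA
  have hAC : A ⊆ C := by rintro _ ⟨x, -, rfl⟩; exact x.2
  have hAcard : A.ncard = S.ncard := Set.ncard_image_of_injective _ Subtype.val_injective
  have hmono : ∀ v, v ∈ closedNbhd G D → v ∈ closedNbhd G (D ∪ A) := by
    rintro v (h | ⟨u, hu, h⟩)
    · exact Or.inl (Or.inl h)
    · exact Or.inr ⟨u, Or.inl hu, h⟩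
  have hw1 : ∀ v, IsWhite G (D ∪ A) v → IsWhite G D v := by
    rintro v ⟨h1, u, hu, h2⟩
    exact ⟨fun h => h1 (hmono _ h), u, hu, fun h => h2 (hmono _ h)⟩
  have hnotA : ∀ v, IsWhite G D v → v ∉ C → v ∉ closedNbhd G (D ∪ A) := by
    intro v hv hvC h
    rcases h with (h | h) | ⟨u, hu | hu, h⟩
    · exact hv.1 (Or.inl h)
    · exact hvC (hAC h)
    · exact hv.1 (Or.inr ⟨u, hu, h⟩)
    · exact hvC (hCcl u (hAC hu) v hv h)
  have hind : ∀ x : C, x ∈ closedNbhd (G.induce C) S → (x : V) ∈ closedNbhd G (D ∪ A) := by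
    rintro x (h | ⟨u, hu, h⟩)
    · exact Or.inl (Or.inr ⟨x, h, rfl⟩)
    · exact Or.inr ⟨u, Or.inr ⟨u, hu, rfl⟩, h⟩
  have hnbC : ∀ v ∈ C, ∀ u, G.Adj v u → u ∉ closedNbhd G D → u ∈ C ∧ IsWhite G D u := by
    intro v hv u hu hu2
    have : IsWhite G D u := ⟨hu2, v, hu.symm, (hCW v hv).1⟩
    exact ⟨hCcl v hv u this hu, this⟩
  have hwiff : ∀ v, IsWhite G (D ∪ A) v ↔ IsWhite G D v ∧ v ∉ C := by
    intro v
    constructor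
    · intro h
      refine ⟨hw1 v h, fun hvC => ?_⟩
      obtain ⟨h1, u, hu, h2⟩ := h
      have huC := (hnbC v hvC u hu (fun h => h2 (hmono _ h))).1
      rcases hS ⟨v, hvC⟩ ⟨u, huC⟩ hu with h | h
      · exact h1 (hind _ h)
      · exact h2 (hind _ h)
    · rintro ⟨h, hvC⟩
      obtain ⟨h1, u, hu, h2⟩ := id h
      have huW : IsWhite G D u := ⟨h2, v, hu.symm, h1⟩
      have huC : u ∉ C := fun hc => hvC (hCcl u hc v h hu.symm)
      exact ⟨hnotA v h hvC, u, hu, hnotA u huW huC⟩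
  have hε : 0 ≤ β3 - β2 := by linarith
  refine ⟨fun a ha haD => (hCW a (hAC ha)).1 (Or.inl haD), ?_⟩
  -- pointwise drop
  have hpt : ∀ v, (if v ∈ C then ω else 0) +
      (∑ u : V, if u ∈ C ∧ IsBlue G D v ∧ G.Adj u v then (β3 - β2) else 0) ≤
      vertexWeight G D ω β1 β2 β3 β4 v - vertexWeight G (D ∪ A) ω β1 β2 β3 β4 v := by
    intro v
    by_cases hvb : IsBlue G D v
    · have hvw : ¬ IsWhite G D v := fun h => h.1 hvb.1
      have hvw' : ¬ IsWhite G (D ∪ A) v := fun h => hvw (hw1 v h)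
      have hvC : v ∉ C := fun h => hvw (hCW v h)
      have e1 : (residualGraph G D).neighborSet v = {u | G.Adj v u ∧ IsWhite G D u} := by
        ext u; simp [residualGraph, hvw]
      have e2 : (residualGraph G (D ∪ A)).neighborSet v =
          {u | G.Adj v u ∧ IsWhite G D u ∧ u ∉ C} := by
        ext u; simp [residualGraph, hwiff]; tauto
      have e3 : resDegree G D v = {u | G.Adj v u ∧ u ∈ C}.ncard + resDegree G (D ∪ A) v := by
        unfold resDegree
        rw [e1, e2, ← Set.ncard_union_eq ?_ (Set.toFinite _) (Set.toFinite _)]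
        · congr 1
          ext u
          have := hCW u
          simp only [Set.mem_setOf_eq, Set.mem_union]
          tauto
        · rw [Set.disjoint_left]
          rintro u ⟨-, h⟩ ⟨-, -, h'⟩
          exact h' h
      have e4 : (∑ u : V, if u ∈ C ∧ IsBlue G D v ∧ G.Adj u v then (β3 - β2) else 0) =
          ({u | G.Adj v u ∧ u ∈ C}.ncard : ℝ) * (β3 - β2) := by
        rw [← Finset.sum_filter, Finset.sum_const, nsmul_eq_mul, Set.ncard_eq_toFinset_card']
        congr 3
        ext u
        simp [hvb, G.adj_comm, and_comm]
      have hpos : 1 ≤ resDegree G D v := by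
        unfold resDegree
        rw [e1]
        obtain ⟨-, u, hu⟩ := hvb
        exact (Set.ncard_pos (Set.toFinite _)).2 ⟨u, hu⟩
      have h3 := hB v hvb
      have hb' : IsBlue G (D ∪ A) v ↔ 1 ≤ resDegree G (D ∪ A) v := by
        unfold resDegree
        rw [e2, Nat.one_le_iff_ne_zero, ← Nat.pos_iff_ne_zero, Set.ncard_pos (Set.toFinite _)]
        constructor
        · rintro ⟨-, u, hu, hu2⟩
          exact ⟨u, hu, (hwiff u).1 hu2⟩
        · rintro ⟨u, hu, hu2⟩
          exact ⟨hmono _ hvb.1, u, hu, (hwiff u).2 hu2⟩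
      rw [e4]
      unfold vertexWeight
      simp only [hvb, hvw, hvw', hvC, hb', if_true, if_false]
      generalize resDegree G D v = d at *
      generalize resDegree G (D ∪ A) v = d' at *
      generalize {u | G.Adj v u ∧ u ∈ C}.ncard = c at *
      subst e3
      have hc : c ≤ 3 := by omega
      have hd : d' ≤ 3 := by omega
      interval_cases c <;> interval_cases d' <;> first | omega | (norm_num; done) | (norm_num; linarith)
    · have e0 : (∑ u : V, if u ∈ C ∧ IsBlue G D v ∧ G.Adj u v then (β3 - β2) else 0) = 0 := by
        simp [hvb]
      rw [e0]
      by_cases hvw : IsWhite G D v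
      · by_cases hvC : v ∈ C
        · have h1 : ¬ IsWhite G (D ∪ A) v := fun h => ((hwiff v).1 h).2 hvC
          have h2 : ¬ IsBlue G (D ∪ A) v := by
            rintro ⟨-, u, hu, hu2⟩
            obtain ⟨h3, h4⟩ := (hwiff u).1 hu2
            exact h4 (hCcl v hvC u h3 hu)
          simp [vertexWeight, hvw, hvC, h1, h2]
        · have h1 : IsWhite G (D ∪ A) v := (hwiff v).2 ⟨hvw, hvC⟩
          simp [vertexWeight, hvw, hvC, h1]
      · have hvC : v ∉ C := fun h => hvw (hCW v h)
        have h1 : ¬ IsWhite G (D ∪ A) v := fun h => hvw (hw1 v h)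
        have h2 : ¬ IsBlue G (D ∪ A) v := by
          rintro ⟨h0, u, hu, hu2⟩
          obtain ⟨h3, h4⟩ := (hwiff u).1 hu2
          by_cases hvD : v ∈ closedNbhd G D
          · exact hvb ⟨hvD, u, hu, h3⟩
          · exact hvw ⟨hvD, u, hu, h3.1⟩
        simp [vertexWeight, hvw, hvC, h1, h2, hvb]
  have hsum := Finset.sum_le_sum (fun v (_ : v ∈ (Finset.univ : Finset V)) => hpt v)
  rw [Finset.sum_sub_distrib, Finset.sum_add_distrib, Finset.sum_comm, ← Finset.sum_add_distrib]
    at hsum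
  have hlow : ∀ u : V, (if u ∈ C then (1/3 : ℝ) else 0) ≤ (if u ∈ C then ω else 0) +
      ∑ v : V, if u ∈ C ∧ IsBlue G D v ∧ G.Adj u v then (β3 - β2) else 0 := by
    intro u
    by_cases hu : u ∈ C
    · have e4 : (∑ v : V, if u ∈ C ∧ IsBlue G D v ∧ G.Adj u v then (β3 - β2) else 0) =
          ({v | IsBlue G D v ∧ G.Adj u v}.ncard : ℝ) * (β3 - β2) := by
        rw [← Finset.sum_filter, Finset.sum_const, nsmul_eq_mul, Set.ncard_eq_toFinset_card']
        congr 3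
        ext v
        simp [hu]
      have hle : δ ≤ {v | IsBlue G D v ∧ G.Adj u v}.ncard + 2 := by
        have hsub : G.neighborSet u ⊆
            {v | IsBlue G D v ∧ G.Adj u v} ∪ {v | G.Adj u v ∧ IsWhite G D v} := by
          intro v hv
          have hv' : G.Adj u v := hv
          by_cases hvD : v ∈ closedNbhd G D
          · exact Or.inl ⟨⟨hvD, u, hv'.symm, hCW u hu⟩, hv'⟩
          · exact Or.inr ⟨hv', (hnbC u hu v hv' hvD).2⟩
        have h1 := Set.ncard_le_ncard hsub (Set.toFinite _)
        have h2 := Set.ncard_union_le {v | IsBlue G D v ∧ G.Adj u v} {v | G.Adj u v ∧ IsWhite G D v}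
        have h3 := hW u (hCW u hu)
        have h4 := hmin u
        unfold whiteNbhdCount at h3
        omega
      have hle' : (δ : ℝ) - 2 ≤ ({v | IsBlue G D v ∧ G.Adj u v}.ncard : ℝ) := by
        have : (δ : ℝ) ≤ ({v | IsBlue G D v ∧ G.Adj u v}.ncard : ℝ) + 2 := by exact_mod_cast hle
        linarith
      rw [e4]
      simp only [hu, if_true]
      have := mul_le_mul_of_nonneg_right hle' hε
      linarith
    · simp [hu]
  have hsum2 := Finset.sum_le_sum (fun v (_ : v ∈ (Finset.univ : Finset V)) => hlow v)
  have hC3 : (∑ u : V, if u ∈ C then (1/3 : ℝ) else 0) = (C.ncard : ℝ) * (1/3) := by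
    rw [← Finset.sum_filter, Finset.sum_const, nsmul_eq_mul, Set.ncard_eq_toFinset_card']
    congr 3
    ext v
    simp
  have hfin : (3 : ℝ) * S.ncard ≤ C.ncard := by exact_mod_cast hcardS
  rw [hAcard]
  unfold totalWeight
  linarith
end

section
/- Let G be a graph, let D ⊆ V(G), and let ω, β1, β2, β3, β4 be positive reals satisfying ω ≥ β4 ≥ β3 ≥ β2 ≥ β1 > 0, 4ω + β2 ≥ 1, 7ω + β2 ≥ 2, and 10ω + β2 ≥ 3. Suppose in the isolation residual graph G_D^ι every connected component of the subgraph induced by the white vertices is isomorphic to K_2 or to the 5-cycle C_5. If some blue vertex has neighbors in at least two distinct such components, then there exists a D-desirable set of size at most 3. -/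
open Classical

theorem aux_nbhd_mono {V : Type*} (G : SimpleGraph V) {D D' : Set V} (h : D ⊆ D') :
    closedNbhd G D ⊆ closedNbhd G D' := by
  rintro v (hv | ⟨u, hu, ha⟩)
  · exact Or.inl (h hv)
  · exact Or.inr ⟨u, h hu, ha⟩

theorem aux_white_mono {V : Type*} (G : SimpleGraph V) {D D' : Set V} (h : D ⊆ D') {v : V}
    (hv : IsWhite G D' v) : IsWhite G D v := by
  obtain ⟨h1, u, hu, h2⟩ := hv
  exact ⟨fun hh => h1 (aux_nbhd_mono G h hh), u, hu, fun hh => h2 (aux_nbhd_mono G h hh)⟩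

theorem aux_deg_mono {V : Type*} [Fintype V] (G : SimpleGraph V) {D D' : Set V} (h : D ⊆ D')
    (v : V) : resDegree G D' v ≤ resDegree G D v := by
  apply Set.ncard_le_ncard _ (Set.toFinite _)
  rintro u ⟨ha, hw⟩
  exact ⟨ha, hw.imp (aux_white_mono G h) (aux_white_mono G h)⟩

theorem aux_weight_mono {V : Type*} [Fintype V] (G : SimpleGraph V) {D D' : Set V} (h : D ⊆ D')
    (ω β1 β2 β3 β4 : ℝ)
    (hm1 : ω ≥ β4) (hm2 : β4 ≥ β3) (hm3 : β3 ≥ β2) (hm4 : β2 ≥ β1) (hm5 : β1 > 0) (v : V) :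
    vertexWeight G D' ω β1 β2 β3 β4 v ≤ vertexWeight G D ω β1 β2 β3 β4 v := by
  have hd := aux_deg_mono G h v
  have hw := @aux_white_mono V G D D' h v
  have hb : IsBlue G D' v → IsWhite G D v ∨ IsBlue G D v := by
    rintro ⟨_, u, hu, huw⟩
    have huD := aux_white_mono G h huw
    by_cases hv : v ∈ closedNbhd G D
    · exact Or.inr ⟨hv, u, hu, huD⟩
    · exact Or.inl ⟨hv, u, hu, huD.1⟩
  unfold vertexWeight
  by_cases h1 : IsWhite G D v
  · rw [if_pos h1]
    split_ifs <;> linarith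
  · have h1' : ¬ IsWhite G D' v := fun hh => h1 (hw hh)
    rw [if_neg h1, if_neg h1']
    by_cases h2 : IsBlue G D' v
    · have h3 : IsBlue G D v := (hb h2).resolve_left h1
      rw [if_pos h2, if_pos h3]
      split_ifs <;> first | linarith | omega
    · rw [if_neg h2]
      split_ifs <;> linarith

theorem aux_comp_sub {V : Type*} (G : SimpleGraph V) {D C₁ C₂ : Set V}
    (h1 : IsWhiteComponent G D C₁) (h2 : IsWhiteComponent G D C₂) {u : V}
    (hu1 : u ∈ C₁) (hu2 : u ∈ C₂) : C₁ ⊆ C₂ := by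
  intro v hv
  obtain ⟨p⟩ := h1.2.1.preconnected ⟨u, hu1⟩ ⟨v, hv⟩
  have key : ∀ (a b : C₁), (G.induce C₁).Walk a b → (a : V) ∈ C₂ → (b : V) ∈ C₂ := by
    intro a b p
    induction p with
    | nil => exact id
    | cons hadj _ ih =>
      intro ha
      exact ih (h2.2.2 _ ha _ (h1.1 (Subtype.property _)) hadj)
  exact key _ _ p hu2

theorem aux_zero {V : Type*} (G : SimpleGraph V) {D D' C : Set V} (h : D ⊆ D')
    (hC : IsWhiteComponent G D C) (ω β1 β2 β3 β4 : ℝ)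
    (hedge : ∀ u ∈ C, ∀ v ∈ C, G.Adj u v → u ∈ closedNbhd G D' ∨ v ∈ closedNbhd G D') :
    ∀ v ∈ C, vertexWeight G D' ω β1 β2 β3 β4 v = 0 := by
  have nw : ∀ v ∈ C, ¬ IsWhite G D' v := by
    rintro v hv ⟨h1, u, hu, h2⟩
    have : IsWhite G D' u := ⟨h2, v, hu.symm, h1⟩
    exact (hedge v hv u (hC.2.2 v hv u (aux_white_mono G h this) hu) hu).elim h1 h2
  intro v hv
  have nb : ¬ IsBlue G D' v := by
    rintro ⟨_, u, hu, huw⟩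
    exact nw u (hC.2.2 v hv u (aux_white_mono G h huw) hu) huw
  unfold vertexWeight
  rw [if_neg (nw v hv), if_neg nb]

theorem aux_cyc : ∀ a b c : Fin 5, (SimpleGraph.cycleGraph 5).Adj b c →
    (b = a ∨ c = a) ∨ (b = a + 2 ∨ (SimpleGraph.cycleGraph 5).Adj (a+2) b) ∨
      (c = a + 2 ∨ (SimpleGraph.cycleGraph 5).Adj (a+2) c) := by
  simp only [SimpleGraph.cycleGraph_adj]
  decide

theorem aux_comp {V : Type*} [Fintype V] (G : SimpleGraph V) {D C : Set V}
    (hcomp : Nonempty (G.induce C ≃g (⊤ : SimpleGraph (Fin 2))) ∨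
      Nonempty (G.induce C ≃g SimpleGraph.cycleGraph 5)) {x y : V} (hy : y ∈ C)
    (hxy : G.Adj x y) :
    ∃ B ⊆ C, ((B.ncard = 0 ∧ C.ncard = 2) ∨ (B.ncard = 1 ∧ C.ncard = 5)) ∧
      ∀ D' : Set V, x ∈ D' → B ⊆ D' →
      ∀ u ∈ C, ∀ v ∈ C, G.Adj u v → u ∈ closedNbhd G D' ∨ v ∈ closedNbhd G D' := by
  rcases hcomp with ⟨⟨e⟩⟩ | ⟨⟨e⟩⟩
  · refine ⟨∅, by simp, Or.inl ⟨by simp, ?_⟩, ?_⟩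
    · rw [← Nat.card_coe_set_eq, Nat.card_congr e.toEquiv]; simp
    · intro D' hx _ u hu v hv huv
      have hne : e ⟨u, hu⟩ ≠ e ⟨v, hv⟩ := by
        intro hh
        have := e.injective hh
        exact huv.ne (congrArg Subtype.val this)
      have : e ⟨u, hu⟩ = e ⟨y, hy⟩ ∨ e ⟨v, hv⟩ = e ⟨y, hy⟩ := by omega
      rcases this with hh | hh
      · have := congrArg Subtype.val (e.injective hh)
        simp only at this
        exact Or.inl (this ▸ Or.inr ⟨x, hx, hxy⟩)
      · have := congrArg Subtype.val (e.injective hh)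
        simp only at this
        exact Or.inr (this ▸ Or.inr ⟨x, hx, hxy⟩)
  · set z := e.symm (e ⟨y, hy⟩ + 2) with hz
    have hez : e z = e ⟨y, hy⟩ + 2 := by simp [hz]
    refine ⟨{(z : V)}, by simp, Or.inr ⟨by simp, ?_⟩, ?_⟩
    · rw [← Nat.card_coe_set_eq, Nat.card_congr e.toEquiv]; simp
    · intro D' hx hB u hu v hv huv
      have hzD : (z : V) ∈ D' := hB rfl
      have hA : (SimpleGraph.cycleGraph 5).Adj (e ⟨u, hu⟩) (e ⟨v, hv⟩) :=
        e.map_adj_iff.2 huv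
      have k1 : ∀ w (hw : w ∈ C), e ⟨w, hw⟩ = e ⟨y, hy⟩ → w ∈ closedNbhd G D' := by
        intro w hw hh
        have := congrArg Subtype.val (e.injective hh)
        simp only at this
        exact this ▸ Or.inr ⟨x, hx, hxy⟩
      have k2 : ∀ w (hw : w ∈ C), (e ⟨w, hw⟩ = e ⟨y, hy⟩ + 2 ∨
          (SimpleGraph.cycleGraph 5).Adj (e ⟨y, hy⟩ + 2) (e ⟨w, hw⟩)) →
          w ∈ closedNbhd G D' := by
        intro w hw hh
        rw [← hez] at hh
        rcases hh with hh | hh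
        · have := congrArg Subtype.val (e.injective hh)
          simp only at this
          exact this ▸ Or.inl hzD
        · exact Or.inr ⟨z, hzD, e.map_adj_iff.1 hh⟩
      rcases aux_cyc (e ⟨y, hy⟩) _ _ hA with (hh | hh) | hh | hh
      · exact Or.inl (k1 u hu hh)
      · exact Or.inr (k1 v hv hh)
      · exact Or.inl (k2 u hu hh)
      · exact Or.inr (k2 v hv hh)

/-- Claim 4: if every white component is `K₂` or `C₅` and some blue vertex has
neighbors in two distinct white components, then there is a `D`-desirable set
of size at most 3. -/
theorem exists_desirable_of_blue_two_components {V : Type*} [Fintype V]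
    (G : SimpleGraph V) (D : Set V) (ω β1 β2 β3 β4 : ℝ)
    (hm1 : ω ≥ β4) (hm2 : β4 ≥ β3) (hm3 : β3 ≥ β2) (hm4 : β2 ≥ β1) (hm5 : β1 > 0)
    (hc4a : 4 * ω + β2 ≥ 1) (hc4b : 7 * ω + β2 ≥ 2) (hc4c : 10 * ω + β2 ≥ 3)
    (hcomp : ∀ C : Set V, IsWhiteComponent G D C →
      Nonempty (G.induce C ≃g (⊤ : SimpleGraph (Fin 2))) ∨
      Nonempty (G.induce C ≃g SimpleGraph.cycleGraph 5))
    (h : ∃ x, IsBlue G D x ∧ ∃ C₁ C₂ : Set V,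
      IsWhiteComponent G D C₁ ∧ IsWhiteComponent G D C₂ ∧ C₁ ≠ C₂ ∧
      (∃ y₁ ∈ C₁, (residualGraph G D).Adj x y₁) ∧
      (∃ y₂ ∈ C₂, (residualGraph G D).Adj x y₂)) :
    ∃ A : Set V, Desirable G ω β1 β2 β3 β4 D A ∧ A.ncard ≤ 3 := by
  obtain ⟨x, hxb, C₁, C₂, hC1, hC2, hne, ⟨y₁, hy1, ha1⟩, ⟨y₂, hy2, ha2⟩⟩ := h
  obtain ⟨B₁, hB1, hc1, he1⟩ := aux_comp G (D := D) (hcomp C₁ hC1) hy1 ha1.1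
  obtain ⟨B₂, hB2, hc2, he2⟩ := aux_comp G (D := D) (hcomp C₂ hC2) hy2 ha2.1
  have hdisj : Disjoint C₁ C₂ := by
    rw [Set.disjoint_left]
    intro u h1 h2
    exact hne ((aux_comp_sub G hC1 hC2 h1 h2).antisymm (aux_comp_sub G hC2 hC1 h2 h1))
  have hxw : ¬ IsWhite G D x := fun hh => hh.1 hxb.1
  have hxD : x ∉ D := by
    intro hx
    obtain ⟨_, u, hu, huw⟩ := hxb
    exact huw.1 (Or.inr ⟨x, hx, hu⟩)
  have hwD : ∀ u, IsWhite G D u → u ∉ D := fun u hu hd => hu.1 (Or.inl hd)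
  have hdeg : 2 ≤ resDegree G D x := by
    have hyne : y₁ ≠ y₂ := fun hh => Set.disjoint_left.1 hdisj hy1 (hh ▸ hy2)
    rw [← Set.ncard_pair hyne]
    apply Set.ncard_le_ncard _ (Set.toFinite _)
    rintro u (rfl | rfl)
    · exact ha1
    · exact ha2
  set A : Set V := {x} ∪ (B₁ ∪ B₂) with hA
  set D' := D ∪ A with hD'
  have hsub : D ⊆ D' := Set.subset_union_left
  have hxD' : x ∈ D' := by simp [hD', hA]
  have z1 := aux_zero G hsub hC1 ω β1 β2 β3 β4 (he1 D' hxD' (by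
    intro u hu; simp [hD', hA, hu]))
  have z2 := aux_zero G hsub hC2 ω β1 β2 β3 β4 (he2 D' hxD' (by
    intro u hu; simp [hD', hA, hu]))
  have zx : vertexWeight G D' ω β1 β2 β3 β4 x = 0 := by
    have nb : ¬ IsBlue G D' x := by
      rintro ⟨_, u, hu, huw⟩
      exact huw.1 (Or.inr ⟨x, hxD', hu⟩)
    unfold vertexWeight
    rw [if_neg (fun hh => hxw (aux_white_mono G hsub hh)), if_neg nb]
  have wx : β2 ≤ vertexWeight G D ω β1 β2 β3 β4 x := by
    unfold vertexWeight
    rw [if_neg hxw, if_pos hxb]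
    split_ifs <;> first | linarith | omega
  have hx1 : x ∉ C₁ := fun hh => hxw (hC1.1 hh)
  have hx2 : x ∉ C₂ := fun hh => hxw (hC2.1 hh)
  have wC : ∀ C : Set V, IsWhiteComponent G D C →
      (∀ v ∈ C, vertexWeight G D' ω β1 β2 β3 β4 v = 0) →
      ∑ v ∈ C.toFinset, (vertexWeight G D ω β1 β2 β3 β4 v - vertexWeight G D' ω β1 β2 β3 β4 v)
        = C.ncard * ω := by
    intro C hC hz
    rw [Finset.sum_congr rfl (g := fun _ => ω), Finset.sum_const, nsmul_eq_mul,
      Set.ncard_eq_toFinset_card']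
    intro v hv
    rw [Set.mem_toFinset] at hv
    rw [hz v hv, sub_zero, vertexWeight, if_pos (show IsWhite G D v from hC.1 hv)]
  have hdf : Disjoint C₁.toFinset C₂.toFinset := by
    simpa using hdisj
  have hxn : x ∉ C₁.toFinset ∪ C₂.toFinset := by simp [hx1, hx2]
  have main : β2 + (C₁.ncard * ω + C₂.ncard * ω) ≤
      totalWeight G D ω β1 β2 β3 β4 - totalWeight G D' ω β1 β2 β3 β4 := by
    unfold totalWeight
    rw [← Finset.sum_sub_distrib]
    refine le_trans ?_ (Finset.sum_le_sum_of_subset_of_nonneg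
      (Finset.subset_univ (insert x (C₁.toFinset ∪ C₂.toFinset))) ?_)
    · rw [Finset.sum_insert hxn, Finset.sum_union hdf, wC _ hC1 z1, wC _ hC2 z2, zx]
      linarith
    · intro v _ _
      exact sub_nonneg.2 (aux_weight_mono G hsub ω β1 β2 β3 β4 hm1 hm2 hm3 hm4 hm5 v)
  have hAc : A.ncard ≤ 1 + (B₁.ncard + B₂.ncard) := by
    refine (Set.ncard_union_le _ _).trans ?_
    rw [Set.ncard_singleton]
    exact Nat.add_le_add_left (Set.ncard_union_le _ _) 1
  refine ⟨A, ⟨?_, ?_⟩, ?_⟩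
  · rintro u (rfl | hu | hu)
    · exact hxD
    · exact hwD u (hC1.1 (hB1 hu))
    · exact hwD u (hC2.1 (hB2 hu))
  · refine le_trans ?_ main
    have hAr : (A.ncard : ℝ) ≤ 1 + (B₁.ncard + B₂.ncard) := by exact_mod_cast hAc
    rcases hc1 with ⟨h1, h2⟩ | ⟨h1, h2⟩ <;> rcases hc2 with ⟨h3, h4⟩ | ⟨h3, h4⟩ <;>
      rw [h1, h3] at hAr <;> rw [h2, h4] <;> push_cast at hAr ⊢ <;> linarith
  · omega
end

section
/- Let δ ≥ 3 be an integer, let G be a triangle-free graph with minimum degree at least δ, and let D ⊆ V(G) be a set that is not an isolating set of G. Let ω, β1, β2, β3, β4 be positive reals satisfying ω ≥ β4 ≥ β3 ≥ β2 ≥ β1 > 0, 2ω + 2(δ−1)β1 ≥ 1, and 5ω + 5(δ−2)·min(β1, β2/2) ≥ 2. Suppose in the isolation residual graph G_D^ι every connected component of the subgraph induced by the white vertices is isomorphic to K_2 or to the 5-cycle C_5, and for every blue vertex all of its neighbors lie in a single white component. Then there exists a D-desirable set. -/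
open Classical

lemma closedNbhd_mono' {V : Type*} (G : SimpleGraph V) (D A : Set V) {v : V}
    (h : v ∈ closedNbhd G D) : v ∈ closedNbhd G (D ∪ A) := by
  rcases h with h | ⟨u, hu, h⟩
  · exact Or.inl (Or.inl h)
  · exact Or.inr ⟨u, Or.inl hu, h⟩

lemma closedNbhd_mono2 {V : Type*} (G : SimpleGraph V) (D A : Set V) {v : V}
    (h : v ∈ closedNbhd G A) : v ∈ closedNbhd G (D ∪ A) := by
  rcases h with h | ⟨u, hu, h⟩
  · exact Or.inl (Or.inr h)
  · exact Or.inr ⟨u, Or.inr hu, h⟩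

lemma IsWhite.of_union {V : Type*} {G : SimpleGraph V} {D A : Set V} {v : V}
    (h : IsWhite G (D ∪ A) v) : IsWhite G D v := by
  obtain ⟨h1, u, h2, h3⟩ := h
  exact ⟨fun h => h1 (closedNbhd_mono' G D A h), u, h2, fun h => h3 (closedNbhd_mono' G D A h)⟩

lemma resDegree_mono {V : Type*} [Fintype V] (G : SimpleGraph V) (D A : Set V) (v : V) :
    resDegree G (D ∪ A) v ≤ resDegree G D v := by
  unfold resDegree
  apply Set.ncard_le_ncard _ (Set.toFinite _)
  intro x hx
  exact ⟨hx.1, hx.2.imp IsWhite.of_union IsWhite.of_union⟩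

lemma vertexWeight_mono {V : Type*} [Fintype V] (G : SimpleGraph V) (D A : Set V) (v : V)
    (ω β1 β2 β3 β4 : ℝ)
    (hm1 : ω ≥ β4) (hm2 : β4 ≥ β3) (hm3 : β3 ≥ β2) (hm4 : β2 ≥ β1) (hm5 : β1 > 0) :
    vertexWeight G (D ∪ A) ω β1 β2 β3 β4 v ≤ vertexWeight G D ω β1 β2 β3 β4 v := by
  have h1 : IsWhite G (D ∪ A) v → IsWhite G D v := IsWhite.of_union
  have h2 : IsBlue G (D ∪ A) v → IsWhite G D v ∨ IsBlue G D v := by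
    rintro ⟨_, u, hu, hw⟩
    have hw' := hw.of_union
    by_cases hv : v ∈ closedNbhd G D
    · exact Or.inr ⟨hv, u, hu, hw'⟩
    · exact Or.inl ⟨hv, u, hu, hw'.1⟩
  have h3 := resDegree_mono G D A v
  unfold vertexWeight
  split_ifs <;> first | linarith | (exfalso; omega) | (exfalso; tauto)

lemma key {V : Type*} [Fintype V] (G : SimpleGraph V) (D A : Set V) (δ k n : ℕ)
    (hmin : ∀ v : V, δ ≤ (G.neighborSet v).ncard)
    (ω β1 β2 β3 β4 m : ℝ) (hm : 0 ≤ m)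
    (hm1 : ω ≥ β4) (hm2 : β4 ≥ β3) (hm3 : β3 ≥ β2) (hm4 : β2 ≥ β1) (hm5 : β1 > 0)
    (f : Fin n → V) (hf : Function.Injective f)
    (hC : IsWhiteComponent G D (Set.range f))
    (hA : ∀ i, f i ∈ closedNbhd G A)
    (hk : ∀ i, (Finset.univ.filter (fun j => G.Adj (f i) (f j))).card ≤ k)
    (hb : ∀ b, (∃ i, G.Adj b (f i)) → b ∉ Set.range f → IsBlue G D b →
      m * (Finset.univ.filter (fun j => G.Adj b (f j))).card ≤ vertexWeight G D ω β1 β2 β3 β4 b)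
    (hone : ∀ b, (∃ i, G.Adj b (f i)) → IsBlue G D b →
      ∀ y, (residualGraph G D).Adj b y → y ∈ Set.range f) :
    n * ω + n * ((δ : ℝ) - k) * m ≤
      totalWeight G D ω β1 β2 β3 β4 - totalWeight G (D ∪ A) ω β1 β2 β3 β4 := by
  have hnot : ∀ y, y ∈ Set.range f → ¬ IsWhite G (D ∪ A) y := by
    rintro _ ⟨i, rfl⟩ h
    exact h.1 (closedNbhd_mono2 G D A (hA i))
  have hwh : ∀ i, IsWhite G D (f i) := fun i => hC.1 ⟨i, rfl⟩
  have hv : ∀ v, (if v ∈ Set.range f then ω else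
      m * (Finset.univ.filter (fun j => G.Adj v (f j))).card) ≤
      vertexWeight G D ω β1 β2 β3 β4 v - vertexWeight G (D ∪ A) ω β1 β2 β3 β4 v := by
    intro v
    by_cases hvf : v ∈ Set.range f
    · rw [if_pos hvf]
      have hw : IsWhite G D v := hC.1 hvf
      have hnb : ¬ IsBlue G (D ∪ A) v := by
        rintro ⟨_, u, hu, huw⟩
        exact hnot u (hC.2.2 v hvf u huw.of_union hu) huw
      have := hnot v hvf
      simp [vertexWeight, hw, hnb, this]
    · rw [if_neg hvf]
      by_cases hex : ∃ i, G.Adj v (f i)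
      · obtain ⟨i, hi⟩ := hex
        have hnw : ¬ IsWhite G D v := fun h => hvf (hC.2.2 (f i) ⟨i, rfl⟩ v h hi.symm)
        have hbl : IsBlue G D v := by
          refine ⟨?_, f i, hi, hwh i⟩
          by_contra hh
          exact hnw ⟨hh, f i, hi, (hwh i).1⟩
        have hnb : ¬ IsBlue G (D ∪ A) v := by
          rintro ⟨_, u, hu, huw⟩
          exact hnot u (hone v ⟨i, hi⟩ hbl u ⟨hu, Or.inr huw.of_union⟩) huw
        have hnw' : ¬ IsWhite G (D ∪ A) v := fun h => hnw h.of_union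
        have h0 : vertexWeight G (D ∪ A) ω β1 β2 β3 β4 v = 0 := by
          simp [vertexWeight, hnb, hnw']
        rw [h0, sub_zero]
        exact hb v ⟨i, hi⟩ hvf hbl
      · have : (Finset.univ.filter (fun j => G.Adj v (f j))) = ∅ := by
          apply Finset.filter_eq_empty_iff.2
          intro j _ h
          exact hex ⟨j, h⟩
        rw [this]
        have := vertexWeight_mono G D A v ω β1 β2 β3 β4 hm1 hm2 hm3 hm4 hm5
        simp
        linarith
  unfold totalWeight
  rw [← Finset.sum_sub_distrib]
  refine le_trans ?_ (Finset.sum_le_sum (fun v _ => hv v))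
  rw [Finset.sum_ite]
  have e1 : (Finset.univ.filter (fun v => v ∈ Set.range f)) = Finset.univ.image f := by
    ext; simp
  have e2 : ∑ v ∈ Finset.univ.filter (fun v => v ∈ Set.range f), ω = n * ω := by
    rw [e1, Finset.sum_const, Finset.card_image_of_injective _ hf]; simp
  rw [e2, ← Finset.mul_sum]
  have e3 : ∑ v ∈ Finset.univ.filter (fun v => v ∉ Set.range f),
      ((Finset.univ.filter (fun j => G.Adj v (f j))).card : ℝ) =
      ∑ j : Fin n, (((Finset.univ.filter (fun v => v ∉ Set.range f)).filter
        (fun v => G.Adj v (f j))).card : ℝ) := by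
    exact_mod_cast Finset.sum_card_bipartiteAbove_eq_sum_card_bipartiteBelow
      (s := Finset.univ.filter (fun v => v ∉ Set.range f)) (t := (Finset.univ : Finset (Fin n)))
      (fun v j => G.Adj v (f j))
  rw [e3]
  have e4 : ∀ j : Fin n, (δ : ℝ) - k ≤ (((Finset.univ.filter (fun v => v ∉ Set.range f)).filter
        (fun v => G.Adj v (f j))).card : ℝ) := by
    intro j
    have h1 := hmin (f j)
    have h2 := hk j
    have h3 : (G.neighborSet (f j)).ncard ≤
        ((Finset.univ.filter (fun i => G.Adj (f j) (f i))).image f ∪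
        ((Finset.univ.filter (fun v => v ∉ Set.range f)).filter
        (fun v => G.Adj v (f j)))).card := by
      rw [← Set.ncard_coe_finset]
      apply Set.ncard_le_ncard _ (Set.toFinite _)
      intro x hx
      have hx' : G.Adj (f j) x := hx
      by_cases hxr : x ∈ Set.range f
      · obtain ⟨i, rfl⟩ := hxr
        simp only [Finset.coe_union, Set.mem_union, Finset.mem_coe, Finset.mem_image]
        exact Or.inl ⟨i, by simpa using hx', rfl⟩
      · simp only [Finset.coe_union, Set.mem_union, Finset.mem_coe, Finset.mem_filter]
        exact Or.inr ⟨⟨Finset.mem_univ _, hxr⟩, hx'.symm⟩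
    have h4 := Finset.card_union_le ((Finset.univ.filter (fun i => G.Adj (f j) (f i))).image f)
        ((Finset.univ.filter (fun v => v ∉ Set.range f)).filter (fun v => G.Adj v (f j)))
    have h5 := Finset.card_image_le (s := Finset.univ.filter (fun i => G.Adj (f j) (f i))) (f := f)
    have h6 : δ ≤ k + ((Finset.univ.filter (fun v => v ∉ Set.range f)).filter
        (fun v => G.Adj v (f j))).card := by omega
    have h7 : (δ : ℝ) ≤ k + ((Finset.univ.filter (fun v => v ∉ Set.range f)).filter
        (fun v => G.Adj v (f j))).card := by exact_mod_cast h6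
    linarith
  have e5 := Finset.sum_le_sum (s := (Finset.univ : Finset (Fin n))) (fun j _ => e4 j)
  simp only [Finset.sum_const, Finset.card_univ, Fintype.card_fin, nsmul_eq_mul] at e5
  have e6 := mul_le_mul_of_nonneg_left e5 hm
  linarith

lemma comp_subset {V : Type*} {G : SimpleGraph V} {D C C' : Set V}
    (hC : IsWhiteComponent G D C) (hC' : IsWhiteComponent G D C') {c : V}
    (h : c ∈ C) (h' : c ∈ C') : C' ⊆ C := by
  intro x hx
  obtain ⟨p⟩ := hC'.2.1.preconnected ⟨c, h'⟩ ⟨x, hx⟩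
  have : ∀ (a b : C'), (G.induce C').Walk a b → a.1 ∈ C → b.1 ∈ C := by
    intro a b p
    induction p with
    | nil => exact id
    | cons hadj _ ih =>
      intro ha
      exact ih (hC.2.2 _ ha _ (hC'.1 (Subtype.property _)) hadj)
  exact this _ _ p h

lemma exists_comp {V : Type*} {G : SimpleGraph V} {D : Set V} {u : V} (hu : IsWhite G D u) :
    ∃ C, IsWhiteComponent G D C ∧ u ∈ C := by
  refine ⟨{x | ∃ p : G.Walk u x, ∀ y ∈ p.support, IsWhite G D y}, ⟨?_, ?_, ?_⟩, ?_⟩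
  · rintro x ⟨p, hp⟩
    exact hp x p.end_mem_support
  · apply SimpleGraph.induce_connected_of_patches u
    rotate_left
    · rintro v ⟨p, hp⟩
      refine ⟨{y | y ∈ p.support}, ?_, p.start_mem_support, p.end_mem_support, ?_⟩
      · intro y hy
        exact ⟨p.takeUntil y hy, fun z hz => hp z (p.support_takeUntil_subset_support hy hz)⟩
      · exact p.connected_induce_support.preconnected _ _
    · exact ⟨SimpleGraph.Walk.nil, by simpa using hu⟩
  · rintro x ⟨p, hp⟩ v hv hadj
    refine ⟨p.concat hadj, ?_⟩
    intro y hy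
    rw [SimpleGraph.Walk.support_concat] at hy
    simp at hy
    rcases hy with hy | rfl
    · exact hp y hy
    · exact hv
  · exact ⟨SimpleGraph.Walk.nil, by simpa using hu⟩

lemma c5_indep : ∀ S : Finset (Fin 5), (∀ i ∈ S, ∀ j ∈ S, ¬ (SimpleGraph.cycleGraph 5).Adj i j) →
    S.card ≤ 2 := by decide

lemma k2_indep : ∀ S : Finset (Fin 2), (∀ i ∈ S, ∀ j ∈ S, ¬ (⊤ : SimpleGraph (Fin 2)).Adj i j) →
    S.card ≤ 1 := by decide

lemma c5_deg : ∀ i : Fin 5, (Finset.univ.filter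
    (fun j => (SimpleGraph.cycleGraph 5).Adj i j)).card ≤ 2 := by decide

lemma k2_deg : ∀ i : Fin 2, (Finset.univ.filter
    (fun j => (⊤ : SimpleGraph (Fin 2)).Adj i j)).card ≤ 1 := by decide

lemma c5_dom : ∀ i : Fin 5, i = 0 ∨ i = 2 ∨ (SimpleGraph.cycleGraph 5).Adj 0 i ∨
    (SimpleGraph.cycleGraph 5).Adj 2 i := by decide

lemma k2_dom : ∀ i : Fin 2, i = 0 ∨ (⊤ : SimpleGraph (Fin 2)).Adj 0 i := by decide

lemma indep_of_tf {V : Type*} {G : SimpleGraph V} (htf : G.CliqueFree 3) {n : ℕ}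
    (H : SimpleGraph (Fin n)) (f : Fin n → V) (hadj : ∀ i j, G.Adj (f i) (f j) ↔ H.Adj i j)
    (b : V) : ∀ i ∈ Finset.univ.filter (fun j => G.Adj b (f j)),
      ∀ j ∈ Finset.univ.filter (fun j => G.Adj b (f j)), ¬ H.Adj i j := by
  intro i hi j hj h
  simp only [Finset.mem_filter, Finset.mem_univ, true_and] at hi hj
  exact htf {b, f i, f j} (SimpleGraph.is3Clique_triple_iff.2 ⟨hi, hj, (hadj i j).2 h⟩)

lemma weight_ge {V : Type*} [Fintype V] (G : SimpleGraph V) (D : Set V) (n : ℕ)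
    (ω β1 β2 β3 β4 : ℝ)
    (hm1 : ω ≥ β4) (hm2 : β4 ≥ β3) (hm3 : β3 ≥ β2) (hm4 : β2 ≥ β1)
    (f : Fin n → V) (hf : Function.Injective f) (hw : ∀ i, IsWhite G D (f i))
    (b : V) (hb : IsBlue G D b) :
    β1 ≤ vertexWeight G D ω β1 β2 β3 β4 b ∧
    (2 ≤ (Finset.univ.filter (fun j => G.Adj b (f j))).card →
      β2 ≤ vertexWeight G D ω β1 β2 β3 β4 b) := by
  have h : (Finset.univ.filter (fun j => G.Adj b (f j))).card ≤ resDegree G D b := by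
    rw [← Finset.card_image_of_injective _ hf, ← Set.ncard_coe_finset]
    apply Set.ncard_le_ncard _ (Set.toFinite _)
    intro x hx
    simp only [Finset.coe_image, Set.mem_image, Finset.mem_coe, Finset.mem_filter,
      Finset.mem_univ, true_and] at hx
    obtain ⟨i, hi, rfl⟩ := hx
    exact ⟨hi, Or.inr (hw i)⟩
  unfold vertexWeight
  constructor
  · split_ifs <;> linarith
  · intro h2
    split_ifs <;> first | linarith | (exfalso; omega)

/-- Claim 6: the triangle-free analogue of the final claim. -/
theorem exists_desirable_final_triangleFree (δ : ℕ) (hδ : 3 ≤ δ) {V : Type*} [Fintype V]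
    (G : SimpleGraph V) (htf : G.CliqueFree 3)
    (hmin : ∀ v : V, δ ≤ (G.neighborSet v).ncard)
    (D : Set V) (hD : ¬ IsIsolatingSet G D) (ω β1 β2 β3 β4 : ℝ)
    (hm1 : ω ≥ β4) (hm2 : β4 ≥ β3) (hm3 : β3 ≥ β2) (hm4 : β2 ≥ β1) (hm5 : β1 > 0)
    (hc6a : 2 * ω + 2 * ((δ : ℝ) - 1) * β1 ≥ 1)
    (hc6b : 5 * ω + 5 * ((δ : ℝ) - 2) * min β1 (β2 / 2) ≥ 2)
    (hcomp : ∀ C : Set V, IsWhiteComponent G D C →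
      Nonempty (G.induce C ≃g (⊤ : SimpleGraph (Fin 2))) ∨
      Nonempty (G.induce C ≃g SimpleGraph.cycleGraph 5))
    (hone : ∀ x, IsBlue G D x → ∃ C : Set V, IsWhiteComponent G D C ∧
      ∀ y, (residualGraph G D).Adj x y → y ∈ C) :
    ∃ A : Set V, Desirable G ω β1 β2 β3 β4 D A := by
  have ⟨u, hu⟩ : ∃ u, IsWhite G D u := by
    unfold IsIsolatingSet at hD
    push Not at hD
    obtain ⟨u, v, h, h1, h2⟩ := hD
    exact ⟨u, h1, v, h, h2⟩
  obtain ⟨C, hC, -⟩ := exists_comp hu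
  have hone' : ∀ {n : ℕ} (f : Fin n → V), IsWhiteComponent G D (Set.range f) →
      ∀ b, (∃ i, G.Adj b (f i)) → IsBlue G D b →
      ∀ y, (residualGraph G D).Adj b y → y ∈ Set.range f := by
    intro n f hR b ⟨i, hi⟩ hb y hy
    obtain ⟨C', hC', hall⟩ := hone b hb
    have hi' : f i ∈ C' := hall _ ⟨hi, Or.inr (hR.1 ⟨i, rfl⟩)⟩
    exact comp_subset hR hC' ⟨i, rfl⟩ hi' (hall y hy)
  have hget : ∀ {n : ℕ} (H : SimpleGraph (Fin n)), Nonempty (G.induce C ≃g H) →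
      ∃ f : Fin n → V, Function.Injective f ∧ Set.range f = C ∧
        ∀ i j, G.Adj (f i) (f j) ↔ H.Adj i j := by
    rintro n H ⟨e⟩
    refine ⟨fun i => (e.symm i).1, fun i j h => e.symm.injective (Subtype.ext h), ?_, ?_⟩
    · ext x
      constructor
      · rintro ⟨i, rfl⟩
        exact (e.symm i).2
      · intro hx
        exact ⟨e ⟨x, hx⟩, by simp⟩
    · intro i j
      exact e.symm.map_adj_iff
  have hnD : ∀ x ∈ C, x ∈ Dᶜ := fun x hx hxD => (hC.1 hx).1 (Or.inl hxD)
  rcases hcomp C hC with h | h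
  · obtain ⟨f, hf, rfl, hadj⟩ := hget _ h
    refine ⟨{f 0}, ?_, ?_⟩
    · rintro _ rfl
      exact hnD _ ⟨0, rfl⟩
    · have := key G D {f 0} δ 1 2 hmin ω β1 β2 β3 β4 β1 hm5.le hm1 hm2 hm3 hm4 hm5 f hf hC
        (fun i => by
          rcases k2_dom i with rfl | h
          · exact Or.inl rfl
          · exact Or.inr ⟨f 0, rfl, (hadj _ _).2 h⟩)
        (fun i => by
          simp only [hadj]
          convert k2_deg i)
        (fun b _ _ hb => by
          have h1 := k2_indep _ (indep_of_tf htf _ f hadj b)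
          have h2 := (weight_ge G D 2 ω β1 β2 β3 β4 hm1 hm2 hm3 hm4 f hf
            (fun i => hC.1 ⟨i, rfl⟩) b hb).1
          have h3 : ((Finset.univ.filter (fun j => G.Adj b (f j))).card : ℝ) ≤ 1 := by
            exact_mod_cast h1
          nlinarith)
        (hone' f hC)
      rw [Set.ncard_singleton]
      push_cast at this ⊢
      linarith
  · obtain ⟨f, hf, rfl, hadj⟩ := hget _ h
    refine ⟨{f 0, f 2}, ?_, ?_⟩
    · rintro _ (rfl | rfl)
      · exact hnD _ ⟨0, rfl⟩
      · exact hnD _ ⟨2, rfl⟩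
    · have hmn : 0 ≤ min β1 (β2 / 2) := le_min hm5.le (by linarith)
      have := key G D {f 0, f 2} δ 2 5 hmin ω β1 β2 β3 β4 (min β1 (β2 / 2)) hmn
        hm1 hm2 hm3 hm4 hm5 f hf hC
        (fun i => by
          rcases c5_dom i with rfl | rfl | h | h
          · exact Or.inl (Or.inl rfl)
          · exact Or.inl (Or.inr rfl)
          · exact Or.inr ⟨f 0, Or.inl rfl, (hadj _ _).2 h⟩
          · exact Or.inr ⟨f 2, Or.inr rfl, (hadj _ _).2 h⟩)
        (fun i => by
          simp only [hadj]
          convert c5_deg i)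
        (fun b _ _ hb => by
          have h1 := c5_indep _ (indep_of_tf htf _ f hadj b)
          obtain ⟨h2, h3⟩ := weight_ge G D 5 ω β1 β2 β3 β4 hm1 hm2 hm3 hm4 f hf
            (fun i => hC.1 ⟨i, rfl⟩) b hb
          have h4 := min_le_left β1 (β2 / 2)
          have h5 := min_le_right β1 (β2 / 2)
          generalize (Finset.univ.filter (fun j => G.Adj b (f j))).card = c at *
          interval_cases c
          · push_cast; linarith
          · push_cast; linarith
          · have := h3 le_rfl
            push_cast; linarith)
        (hone' f hC)
      rw [Set.ncard_pair (fun h => by have := hf h; revert this; decide)]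
      push_cast at this ⊢
      linarith
end

section
/- For every positive integer N there exists a connected 4-regular graph G of order n ≥ N such that ι(G) ≥ n/4. -/
open Classical

/-- Adjacency inside one block of eight vertices; `7` is the hub. -/
def blockAdj (x y : Fin 8) : Bool :=
  if x = 7 then (y == 0 || y == 3)
  else if y = 7 then (x == 0 || x == 3)
  else !(x == y || (x.val + 1) % 7 == y.val || (y.val + 1) % 7 == x.val ||
    (x == 0 && y == 3) || (x == 3 && y == 0))

/-- Blocks whose hubs are joined in a cycle. -/
def bigGraph (k : ℕ) : SimpleGraph (Fin (k + 3) × Fin 8) where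
  Adj p q := (p.1 = q.1 ∧ blockAdj p.2 q.2 = true) ∨
    (p.2 = 7 ∧ q.2 = 7 ∧ (SimpleGraph.cycleGraph (k + 3)).Adj p.1 q.1)
  symm := ⟨by
    rintro ⟨i, x⟩ ⟨j, y⟩ h
    have hs : ∀ x y, blockAdj x y = true → blockAdj y x = true := by decide
    rcases h with ⟨h1, h2⟩ | ⟨h1, h2, h3⟩
    · exact Or.inl ⟨h1.symm, hs _ _ h2⟩
    · exact Or.inr ⟨h2, h1, h3.symm⟩⟩
  loopless := ⟨by
    rintro ⟨i, x⟩ h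
    have hs : ∀ x, ¬ blockAdj x x = true := by decide
    rcases h with ⟨h1, h2⟩ | ⟨h1, h2, h3⟩
    · exact hs _ h2
    · exact h3.ne rfl⟩

lemma bigGraph_connected (k : ℕ) : (bigGraph k).Connected := by
  have hin : ∀ i x, (bigGraph k).Reachable (i, 7) (i, x) := by
    intro i x
    have adj : ∀ x y, blockAdj x y = true → (bigGraph k).Reachable (i, x) (i, y) := fun x y h =>
      SimpleGraph.Adj.reachable (Or.inl ⟨rfl, h⟩)
    have hp : ∀ x : Fin 8, x = 7 ∨ blockAdj 7 x = true ∨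
      (∃ y, blockAdj 7 y = true ∧ blockAdj y x = true) := by decide
    rcases hp x with rfl | h | ⟨y, h1, h2⟩
    · exact SimpleGraph.Reachable.refl _
    · exact adj _ _ h
    · exact (adj _ _ h1).trans (adj _ _ h2)
  have hub : ∀ i j, (bigGraph k).Reachable (i, 7) (j, 7) := by
    intro i j
    have hc : (SimpleGraph.cycleGraph (k + 3)).Reachable i j :=
      SimpleGraph.cycleGraph_connected.preconnected i j
    let f : SimpleGraph.cycleGraph (k + 3) →g bigGraph k :=
      { toFun := fun i => (i, 7), map_rel' := fun h => Or.inr ⟨rfl, rfl, h⟩ }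
    exact hc.map f
  haveI : Nonempty (Fin (k + 3) × Fin 8) := ⟨(0, 0)⟩
  refine ⟨?_⟩
  rintro ⟨i, x⟩ ⟨j, y⟩
  exact (hin i x).symm.trans ((hub i j).trans (hin j y))

lemma bigGraph_degree (k : ℕ) (v : Fin (k + 3) × Fin 8) :
    ((bigGraph k).neighborSet v).ncard = 4 := by
  obtain ⟨i, x⟩ := v
  by_cases hx : x = 7
  · subst hx
    have h : (bigGraph k).neighborSet (i, 7) = ({(i, 0), (i, 3)} : Set (Fin (k + 3) × Fin 8)) ∪
        (fun j => (j, (7 : Fin 8))) '' (SimpleGraph.cycleGraph (k + 3)).neighborSet i := by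
      ext ⟨j, y⟩
      have hb : ∀ y, blockAdj 7 y = true ↔ y = 0 ∨ y = 3 := by decide
      simp only [SimpleGraph.mem_neighborSet, bigGraph, hb, Set.mem_union, Set.mem_insert_iff,
        Set.mem_singleton_iff, Prod.mk.injEq, Set.mem_image]
      constructor
      · rintro (⟨rfl, h⟩ | ⟨_, rfl, h⟩)
        · tauto
        · exact Or.inr ⟨j, h, rfl, rfl⟩
      · rintro ((⟨rfl, h⟩ | ⟨rfl, h⟩) | ⟨j', h, rfl, rfl⟩)
        · tauto
        · tauto
        · exact Or.inr ⟨trivial, rfl, h⟩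
    rw [h, Set.ncard_union_eq, Set.ncard_pair, Set.ncard_image_of_injective]
    · have := @SimpleGraph.cycleGraph_degree_three_le k i
      rw [← SimpleGraph.card_neighborSet_eq_degree, ← Nat.card_eq_fintype_card] at this
      rw [← Nat.card_coe_set_eq, this]
    · intro a b h
      simpa using h
    · simp
    · rw [Set.disjoint_left]
      rintro p hp ⟨j, _, rfl⟩
      simp at hp
  · have h : (bigGraph k).neighborSet (i, x) =
        (fun y => (i, y)) '' ((Finset.univ.filter fun y => blockAdj x y = true : Finset (Fin 8)) :
          Set (Fin 8)) := by
      ext ⟨j, y⟩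
      simp only [SimpleGraph.mem_neighborSet, bigGraph, hx, Set.mem_image, Finset.coe_filter,
        Finset.mem_univ, true_and, Prod.mk.injEq, false_and, or_false]
      constructor
      · rintro ⟨rfl, h⟩
        exact ⟨y, h, rfl, rfl⟩
      · rintro ⟨y', h, rfl, rfl⟩
        exact ⟨rfl, h⟩
    rw [h, Set.ncard_image_of_injective, Set.ncard_coe_finset]
    · have hb : ∀ x : Fin 8, x ≠ 7 →
        (Finset.univ.filter fun y => blockAdj x y = true : Finset (Fin 8)).card = 4 := by decide
      convert hb x hx
    · intro a b h
      simpa using h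

lemma bigGraph_isolating (k : ℕ) (S : Set (Fin (k + 3) × Fin 8))
    (hS : IsIsolatingSet (bigGraph k) S) : 2 * (k + 3) ≤ S.ncard := by
  rw [Set.ncard_eq_toFinset_card']
  rw [Finset.card_eq_sum_card_fiberwise (f := Prod.fst) (t := Finset.univ) (by intro x _; simp)]
  have : ∀ i ∈ (Finset.univ : Finset (Fin (k + 3))),
      2 ≤ (S.toFinset.filter fun p => p.1 = i).card := by
    intro i _
    by_contra hlt
    have hle : (S.toFinset.filter fun p => p.1 = i).card ≤ 1 := by omega
    haveI : Nonempty (Fin (k + 3) × Fin 8) := ⟨(0, 0)⟩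
    obtain ⟨⟨j, t⟩, ht⟩ := Finset.card_le_one_iff_subset_singleton.1 hle
    have hmem : ∀ x, (i, x) ∈ S → x = t := by
      intro x hx
      have := ht (Finset.mem_filter.2 ⟨Set.mem_toFinset.2 hx, rfl⟩)
      simp only [Finset.mem_singleton, Prod.mk.injEq] at this
      exact this.2
    have key : ∀ t : Fin 8, ∃ x y, blockAdj x y = true ∧ x ≠ 7 ∧ y ≠ 7 ∧ x ≠ t ∧ y ≠ t ∧
      blockAdj t x = false ∧ blockAdj t y = false := by decide
    obtain ⟨x, y, hxy, hx7, hy7, hxt, hyt, htx, hty⟩ := key t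
    have hno : ∀ z, z ≠ 7 → z ≠ t → blockAdj t z = false → (i, z) ∉ closedNbhd (bigGraph k) S := by
      rintro z hz7 hzt htz (h | ⟨⟨j', w⟩, hw, h⟩)
      · exact hzt (hmem _ h)
      · rcases h with ⟨h1, h2⟩ | ⟨_, h2, _⟩
        · simp only at h1 h2
          subst h1
          rw [hmem _ hw, htz] at h2
          exact absurd h2 (by simp)
        · exact hz7 h2
    rcases hS (i, x) (i, y) (Or.inl ⟨rfl, hxy⟩) with h | h
    · exact hno x hx7 hxt htx h
    · exact hno y hy7 hyt hty h
  have h2 := Finset.sum_le_sum this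
  simp only [Finset.sum_const, Finset.card_univ, Fintype.card_fin, smul_eq_mul] at h2
  rw [mul_comm]
  convert h2

/-- There are arbitrarily large connected 4-regular graphs with isolation number
at least a quarter of their order. -/
theorem exists_four_regular_isolation_ge_quarter (N : ℕ) (hN : 0 < N) :
    ∃ (n : ℕ) (G : SimpleGraph (Fin n)), N ≤ n ∧ G.Connected ∧
      (∀ v : Fin n, (G.neighborSet v).ncard = 4) ∧
      (n : ℝ) / 4 ≤ (isolationNumber G : ℝ) := by
  let e : Fin (N + 3) × Fin 8 ≃ Fin ((N + 3) * 8) := finProdFinEquiv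
  let G : SimpleGraph (Fin ((N + 3) * 8)) := (bigGraph N).comap e.symm
  have hadj : ∀ u v, G.Adj u v ↔ (bigGraph N).Adj (e.symm u) (e.symm v) := fun _ _ => Iff.rfl
  let φ : G ≃g bigGraph N := ⟨e.symm, Iff.rfl⟩
  refine ⟨(N + 3) * 8, G, by omega, φ.connected_iff.2 (bigGraph_connected N), ?_, ?_⟩
  · intro v
    rw [← bigGraph_degree N (e.symm v), ← Set.ncard_image_of_injective _ e.symm.injective]
    congr 1
    ext p
    constructor
    · rintro ⟨u, hu, rfl⟩
      exact hu
    · intro hp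
      refine ⟨e p, ?_, by simp⟩
      rw [SimpleGraph.mem_neighborSet, hadj, Equiv.symm_apply_apply]
      exact hp
  · have h : 2 * (N + 3) ≤ isolationNumber G := by
      refine le_csInf ⟨_, Set.univ, fun u v _ => Or.inl (Or.inl trivial), rfl⟩ ?_
      rintro _ ⟨S, hS, rfl⟩
      rw [← Set.ncard_image_of_injective S e.symm.injective]
      apply bigGraph_isolating
      have hcl : ∀ u, u ∈ closedNbhd G S → e.symm u ∈ closedNbhd (bigGraph N) (e.symm '' S) := by
        rintro u (h | ⟨w, hw, h⟩)
        · exact Or.inl ⟨u, h, rfl⟩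
        · exact Or.inr ⟨_, ⟨w, hw, rfl⟩, h⟩
      intro u v huv
      have := hS (e u) (e v) (by rw [hadj]; simpa using huv)
      rcases this with h | h
      · left; simpa using hcl _ h
      · right; simpa using hcl _ h
    have h' : ((2 * (N + 3) : ℕ) : ℝ) ≤ (isolationNumber G : ℝ) := by exact_mod_cast h
    push_cast at h' ⊢
    linarith
end

section
/- For every positive integer N there exists a connected triangle-free 4-regular graph G of order n ≥ N such that ι(G) ≥ 3n/14. -/
open Classical

/-- Bitmask adjacency lists of the 14-vertex gadget (vertex `0` has degree 2, all others 4). -/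
def gadMask : List ℕ := [8224, 6336, 12832, 3264, 4992, 1157, 778, 58, 10320, 2132, 12328, 778, 1046, 1285]

/-- Adjacency in the gadget. -/
def gadAdj (i j : Fin 14) : Bool := Nat.testBit (gadMask.getD i.1 0) j.1

/-- Closed neighborhood in the gadget. -/
def gadDom (i j : Fin 14) : Bool := decide (i = j) || gadAdj i j

theorem gad_symm : ∀ i j, gadAdj i j = true → gadAdj j i = true := by decide +kernel

theorem gad_irrefl : ∀ i, gadAdj i i = false := by decide +kernel

theorem gad_tri : ∀ i j, gadAdj i j = true → ∀ k, gadAdj j k = true → gadAdj i k = false := by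
  decide +kernel

theorem gad_conn : ∀ x, ∃ a, gadDom 0 a = true ∧ ∃ b, gadDom a b = true ∧
    ∃ c, gadDom b c = true ∧ gadDom c x = true := by
  decide +kernel

theorem gad_deg : ∀ x, x ≠ 0 → (Finset.univ.filter (fun y => gadAdj x y = true)).card = 4 := by
  decide +kernel

theorem gad_nbr0 : ∀ y, gadAdj 0 y = true ↔ y = 5 ∨ y = 13 := by
  decide +kernel

theorem gad_iso : ∀ x y, ∃ u, u ≠ 0 ∧ gadDom x u = false ∧ gadDom y u = false ∧
    ∃ v, gadAdj u v = true ∧ v ≠ 0 ∧ gadDom x v = false ∧ gadDom y v = false := by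
  decide +kernel

theorem fin_ne1 (m : ℕ) (i : Fin (m + 4)) : i + 1 ≠ i := by
  intro h
  have h2 : (1 : Fin (m + 4)) = 0 := by simpa using h
  have := congrArg Fin.val h2
  simp at this

theorem fin_ne2 (m : ℕ) (i : Fin (m + 4)) : i + 1 + 1 ≠ i := by
  intro h
  have h2 : (1 + 1 : Fin (m + 4)) = 0 := by rw [add_assoc] at h; simpa using h
  have := congrArg Fin.val h2
  simp only [Fin.val_add, Fin.val_zero, Fin.val_one, Nat.mod_add_mod] at this
  rw [Nat.mod_eq_of_lt (by omega)] at this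
  omega

theorem fin_ne3 (m : ℕ) (i : Fin (m + 4)) : i + 1 + 1 + 1 ≠ i := by
  intro h
  have h2 : (1 + 1 + 1 : Fin (m + 4)) = 0 := by
    rw [add_assoc, add_assoc] at h; rw [add_assoc]; simpa using h
  have := congrArg Fin.val h2
  simp only [Fin.val_add, Fin.val_zero, Fin.val_one, Nat.mod_add_mod] at this
  rw [Nat.mod_eq_of_lt (by omega)] at this
  omega

/-- The ring of `m + 4` gadgets. -/
def ringG (m : ℕ) : SimpleGraph (Fin (m + 4) × Fin 14) where
  Adj p q := (p.1 = q.1 ∧ gadAdj p.2 q.2 = true) ∨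
    (p.2 = 0 ∧ q.2 = 0 ∧ (q.1 = p.1 + 1 ∨ p.1 = q.1 + 1))
  symm := ⟨by
    rintro p q (⟨h, h'⟩ | ⟨h, h', h''⟩)
    · exact Or.inl ⟨h.symm, gad_symm _ _ h'⟩
    · exact Or.inr ⟨h', h, h''.symm⟩⟩
  loopless := ⟨by
    rintro p (⟨_, h'⟩ | ⟨_, _, h''⟩)
    · rw [gad_irrefl] at h'; exact Bool.noConfusion h'
    · exact fin_ne1 m p.1 (by tauto)⟩

theorem ringG_adj (m : ℕ) (p q) : (ringG m).Adj p q ↔ (p.1 = q.1 ∧ gadAdj p.2 q.2 = true) ∨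
    (p.2 = 0 ∧ q.2 = 0 ∧ (q.1 = p.1 + 1 ∨ p.1 = q.1 + 1)) := Iff.rfl

theorem ringG_dom (m : ℕ) (i) (x y) (h : gadDom x y = true) :
    (ringG m).Reachable (i, x) (i, y) := by
  by_cases hxy : x = y
  · subst hxy; exact SimpleGraph.Reachable.refl _
  · apply SimpleGraph.Adj.reachable
    rw [ringG_adj]
    left
    simpa [gadDom, hxy] using h

theorem ringG_conn (m : ℕ) : (ringG m).Connected := by
  have h1 : ∀ i x, (ringG m).Reachable (i, 0) (i, x) := by
    intro i x
    obtain ⟨a, ha, b, hb, c, hc, hx⟩ := gad_conn x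
    exact (((ringG_dom m i _ _ ha).trans (ringG_dom m i _ _ hb)).trans
      (ringG_dom m i _ _ hc)).trans (ringG_dom m i _ _ hx)
  have h2 : ∀ i : Fin (m + 4), (ringG m).Reachable (0, 0) (i, 0) := by
    intro i
    induction i using Fin.induction with
    | zero => exact SimpleGraph.Reachable.refl _
    | succ i ih =>
      refine ih.trans (SimpleGraph.Adj.reachable ?_)
      rw [ringG_adj]
      right
      refine ⟨rfl, rfl, Or.inl ?_⟩
      simp
  have h3 : ∀ p, (ringG m).Reachable (0, 0) p := fun p => (h2 p.1).trans (h1 p.1 p.2)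
  exact { preconnected := fun p q => (h3 p).symm.trans (h3 q), nonempty := ⟨(0, 0)⟩ }

theorem ringG_tri (m : ℕ) (p q r) (h1 : (ringG m).Adj p q) (h2 : (ringG m).Adj q r)
    (h3 : (ringG m).Adj p r) : False := by
  obtain ⟨i, x⟩ := p
  obtain ⟨j, y⟩ := q
  obtain ⟨k, z⟩ := r
  rw [ringG_adj] at h1 h2 h3
  have a1 := fin_ne1 m
  have a2 := fin_ne2 m
  have a3 := fin_ne3 m
  have b1 := gad_irrefl
  have b2 := gad_tri x y
  simp only at h1 h2 h3
  grind

theorem ringG_deg (m : ℕ) (p) : ((ringG m).neighborSet p).ncard = 4 := by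
  obtain ⟨i, x⟩ := p
  by_cases hx : x = 0
  · subst hx
    have : (ringG m).neighborSet (i, 0) =
        (({(i, 5), (i, 13), (i + 1, 0), (i - 1, 0)} : Finset (Fin (m + 4) × Fin 14)) :
          Set (Fin (m + 4) × Fin 14)) := by
      ext ⟨j, y⟩
      have h := gad_nbr0 y
      have hj : i = j + 1 ↔ j = i - 1 := ⟨fun h => by simp [h], fun h => by simp [h]⟩
      simp only [SimpleGraph.mem_neighborSet, ringG_adj, h, hj]
      simp
      grind
    rw [this, Set.ncard_coe_finset]
    have h2 : i + 1 ≠ i - 1 := by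
      intro h
      apply fin_ne2 m i
      rw [h]; simp
    rw [Finset.card_insert_of_notMem, Finset.card_insert_of_notMem, Finset.card_insert_of_notMem,
      Finset.card_singleton]
    · simpa using h2
    · simp
    · simp
  · have : (ringG m).neighborSet (i, x) =
        (((Finset.univ.filter (fun y => gadAdj x y = true)).image (fun y => (i, y)) :
          Finset (Fin (m + 4) × Fin 14)) : Set (Fin (m + 4) × Fin 14)) := by
      ext ⟨j, y⟩
      simp only [SimpleGraph.mem_neighborSet, ringG_adj]
      simp [hx]
      tauto
    rw [this, Set.ncard_coe_finset, Finset.card_image_of_injective]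
    · convert gad_deg x hx
    · intro a b h
      simpa using h

theorem card_le_two_cover {α : Type*} [Inhabited α] (F : Finset α) (h : F.card ≤ 2) :
    ∃ a b, ∀ c ∈ F, c = a ∨ c = b := by
  interval_cases hc : F.card
  · exact ⟨default, default, by simp_all⟩
  · obtain ⟨a, rfl⟩ := Finset.card_eq_one.1 hc
    exact ⟨a, a, by simp⟩
  · obtain ⟨a, b, _, rfl⟩ := Finset.card_eq_two.1 hc
    exact ⟨a, b, by simp⟩

theorem ringG_nd (m : ℕ) (S : Set (Fin (m + 4) × Fin 14)) (i) (x y u : Fin 14)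
    (hS : ∀ c ∈ S, c.1 = i → c.2 = x ∨ c.2 = y) (hu : u ≠ 0)
    (h1 : gadDom x u = false) (h2 : gadDom y u = false) :
    (i, u) ∉ closedNbhd (ringG m) S := by
  simp only [gadDom, Bool.or_eq_false_iff, decide_eq_false_iff_not] at h1 h2
  rintro (h | ⟨c, hc, h⟩)
  · have := hS _ h rfl
    simp only at this
    grind
  · rw [ringG_adj] at h
    have := hS _ hc
    simp only at h
    grind

theorem ringG_iso (m : ℕ) (S : Set (Fin (m + 4) × Fin 14)) (hS : IsIsolatingSet (ringG m) S) :
    3 * (m + 4) ≤ S.ncard := by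
  rw [Set.ncard_eq_toFinset_card' S]
  rw [Finset.card_eq_sum_card_fiberwise (f := Prod.fst) (t := Finset.univ) (by simp)]
  have key : ∀ i ∈ (Finset.univ : Finset (Fin (m + 4))),
      3 ≤ (S.toFinset.filter (fun p => p.1 = i)).card := by
    intro i _
    by_contra hlt
    obtain ⟨a, b, hab⟩ := card_le_two_cover _ (Nat.le_of_lt_succ (not_le.1 hlt))
    obtain ⟨u, hu, h1, h2, v, huv, hv, h3, h4⟩ := gad_iso a.2 b.2
    have hS' : ∀ c ∈ S, c.1 = i → c.2 = a.2 ∨ c.2 = b.2 := by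
      intro c hc hi
      rcases hab c (by simp [hc, hi]) with h | h <;> simp [h]
    rcases hS (i, u) (i, v) (Or.inl ⟨rfl, huv⟩) with h | h
    · exact ringG_nd m S i _ _ u hS' hu h1 h2 h
    · exact ringG_nd m S i _ _ v hS' hv h3 h4 h
  have := Finset.card_nsmul_le_sum _ _ _ key
  simp only [Finset.card_univ, Fintype.card_fin, smul_eq_mul] at this
  omega

theorem iso_map_isolating {V W : Type*} {G : SimpleGraph V} {H : SimpleGraph W} (e : G ≃g H)
    (S : Set V) (hS : IsIsolatingSet G S) : IsIsolatingSet H (e '' S) := by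
  have key : ∀ w, e.symm w ∈ closedNbhd G S → w ∈ closedNbhd H (e '' S) := by
    rintro w (h | ⟨u, hu, h⟩)
    · exact Or.inl ⟨_, h, by simp⟩
    · refine Or.inr ⟨e u, ⟨u, hu, rfl⟩, ?_⟩
      have := e.map_adj_iff.2 h
      simpa using this
  intro u v huv
  exact (hS _ _ (e.symm.map_adj_iff.2 huv)).imp (key u) (key v)

/-- There are arbitrarily large connected triangle-free 4-regular graphs with isolation
number at least `3/14` of their order. -/
theorem exists_triangleFree_four_regular_isolation_ge (N : ℕ) (hN : 0 < N) :
    ∃ (n : ℕ) (G : SimpleGraph (Fin n)), N ≤ n ∧ G.Connected ∧ G.CliqueFree 3 ∧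
      (∀ v : Fin n, (G.neighborSet v).ncard = 4) ∧
      3 * (n : ℝ) / 14 ≤ (isolationNumber G : ℝ) := by
  let φ : Fin ((N + 4) * 14) ≃ Fin (N + 4) × Fin 14 := finProdFinEquiv.symm
  let G : SimpleGraph (Fin ((N + 4) * 14)) := (ringG N).comap φ
  let e : G ≃g ringG N := SimpleGraph.Iso.comap φ (ringG N)
  refine ⟨(N + 4) * 14, G, by omega, ?_, ?_, ?_, ?_⟩
  · exact e.connected_iff.2 (ringG_conn N)
  · intro s hs
    obtain ⟨a, b, c, hab, hac, hbc, _⟩ := SimpleGraph.is3Clique_iff.1 hs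
    exact ringG_tri N _ _ _ (e.map_adj_iff.2 hab) (e.map_adj_iff.2 hbc) (e.map_adj_iff.2 hac)
  · intro v
    have h : G.neighborSet v = φ ⁻¹' ((ringG N).neighborSet (φ v)) := rfl
    rw [h, Set.ncard_preimage_of_injective_subset_range φ.injective (by simp), ringG_deg]
  · have h : 3 * (N + 4) ≤ isolationNumber G := by
      apply le_csInf
      · exact ⟨_, Set.univ, fun u v _ => Or.inl (Or.inl trivial), rfl⟩
      · rintro k ⟨S, hS, rfl⟩
        have h1 := ringG_iso N _ (iso_map_isolating e S hS)
        rwa [Set.ncard_image_of_injective _ e.injective] at h1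
    have h' : ((3 * (N + 4) : ℕ) : ℝ) ≤ (isolationNumber G : ℝ) := by exact_mod_cast h
    push_cast at h' ⊢
    linarith
end

section
/- For every positive integer N there exists a connected 5-regular graph G of order n ≥ N such that ι(G) ≥ 3n/14. -/
open Classical

/-- Neighbourhood bit masks of the 14-vertex gadget. -/
def hMask : Fin 14 → ℕ := ![12800, 1368, 14656, 10402, 11522, 5000, 4742, 3176, 1078, 5217, 914, 8348, 613, 2077]

/-- Adjacency in the gadget. -/
def hAdj (u v : Fin 14) : Bool := (hMask u).testBit v.val

lemma hAdj_symm : ∀ u v, hAdj u v = true → hAdj v u = true := by decide +kernel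

lemma hAdj_irrefl : ∀ u, ¬ hAdj u u = true := by decide +kernel

lemma hAdj_card : ∀ v : Fin 14, v ≠ 0 →
    (Finset.univ.filter (fun w => hAdj v w = true)).card = 5 := by decide +kernel

lemma hAdj_card0 : (Finset.univ.filter (fun w => hAdj 0 w = true)).card = 3 := by decide +kernel

lemma hAdj_conn : ∀ v : Fin 14, v = 0 ∨ hAdj 0 v = true ∨ (∃ a, hAdj 0 a = true ∧ hAdj a v = true) ∨
    ∃ a b, hAdj 0 a = true ∧ hAdj a b = true ∧ hAdj b v = true := by decide +kernel

lemma hAdj_key : ∀ x y : Fin 14, ∃ u v : Fin 14, u ≠ 0 ∧ v ≠ 0 ∧ hAdj u v = true ∧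
    u ≠ x ∧ u ≠ y ∧ v ≠ x ∧ v ≠ y ∧ hAdj x u = false ∧ hAdj y u = false ∧
    hAdj x v = false ∧ hAdj y v = false := by decide +kernel

/-- The ring of `m + 3` gadgets. -/
def bigG (m : ℕ) : SimpleGraph (Fin (m + 3) × Fin 14) where
  Adj p q := (p.1 = q.1 ∧ hAdj p.2 q.2 = true) ∨
    (p.2 = 0 ∧ q.2 = 0 ∧ (q.1 = p.1 + 1 ∨ p.1 = q.1 + 1))
  symm := ⟨by
    rintro p q (⟨h1, h2⟩ | ⟨h1, h2, h3⟩)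
    · exact Or.inl ⟨h1.symm, hAdj_symm _ _ h2⟩
    · exact Or.inr ⟨h2, h1, h3.symm⟩⟩
  loopless := ⟨by
    rintro p (⟨h1, h2⟩ | ⟨h1, h2, h3⟩)
    · exact hAdj_irrefl _ h2
    · rcases h3 with h | h <;> simp at h⟩

lemma fin_two_ne (m : ℕ) (i : Fin (m + 3)) : i + 1 ≠ i - 1 := by
  intro h
  have h2 : (1 : Fin (m + 3)) + 1 = 0 := by
    have : i + (1 + 1) = i + 0 := by rw [← add_assoc, h]; simp
    exact add_left_cancel this
  have := congrArg Fin.val h2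
  simp [Fin.val_add] at this
  rw [Nat.mod_eq_of_lt (by omega)] at this
  omega

/-- The inclusion of a gadget. -/
def rowEmb {m : ℕ} (i : Fin (m + 3)) : Fin 14 ↪ Fin (m + 3) × Fin 14 :=
  ⟨fun w => (i, w), fun a b h => by simpa using h⟩

lemma rowEmb_apply {m : ℕ} (i : Fin (m + 3)) (w : Fin 14) : rowEmb i w = (i, w) := rfl

lemma bigG_deg (m : ℕ) (p : Fin (m + 3) × Fin 14) : ((bigG m).neighborSet p).ncard = 5 := by
  obtain ⟨i, v⟩ := p
  by_cases hv : v = 0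
  · subst hv
    have : (bigG m).neighborSet (i, 0) =
        ↑((Finset.univ.filter (fun w => hAdj 0 w = true)).map (rowEmb i)
          ∪ {(i + 1, 0), (i - 1, 0)}) := by
      ext ⟨j, w⟩
      simp only [SimpleGraph.mem_neighborSet, bigG, Finset.coe_union, Set.mem_union, Finset.mem_coe,
        Finset.mem_map, Finset.mem_filter, Finset.mem_univ, true_and, rowEmb_apply,
        Prod.mk.injEq, Finset.mem_insert, Finset.mem_singleton]
      have : i = j + 1 ↔ j = i - 1 := by rw [eq_sub_iff_add_eq, eq_comm]
      rw [this]
      constructor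
      · rintro (⟨h1, h2⟩ | ⟨h1, h2⟩)
        · exact Or.inl ⟨w, h2, h1, rfl⟩
        · tauto
      · rintro (⟨a, h2, h1, rfl⟩ | h)
        · exact Or.inl ⟨h1, h2⟩
        · tauto
    rw [this, Set.ncard_coe_finset, Finset.card_union_of_disjoint, Finset.card_map, hAdj_card0,
      Finset.card_pair]
    · simpa using fin_two_ne m i
    · rw [Finset.disjoint_left]
      rintro ⟨j, w⟩ h
      simp only [Finset.mem_map, Finset.mem_filter, Finset.mem_univ, true_and,
        rowEmb_apply, Prod.mk.injEq] at h
      obtain ⟨a, h1, rfl, rfl⟩ := h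
      intro h
      simp only [Finset.mem_insert, Finset.mem_singleton, Prod.mk.injEq] at h
      have : a = 0 := by tauto
      subst this
      exact hAdj_irrefl _ h1
  · have : (bigG m).neighborSet (i, v) =
        ↑((Finset.univ.filter (fun w => hAdj v w = true)).map
          (rowEmb i)) := by
      ext ⟨j, w⟩
      simp only [SimpleGraph.mem_neighborSet, bigG, Finset.mem_coe,
        Finset.mem_map, Finset.mem_filter, Finset.mem_univ, true_and, rowEmb_apply,
        Prod.mk.injEq]
      constructor
      · rintro (⟨h1, h2⟩ | ⟨h1, h2⟩)
        · exact ⟨w, h2, h1, rfl⟩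
        · tauto
      · rintro ⟨a, h2, h1, rfl⟩
        exact Or.inl ⟨h1, h2⟩
    rw [this, Set.ncard_coe_finset, Finset.card_map, hAdj_card v hv]

lemma bigG_reach (m : ℕ) (p : Fin (m + 3) × Fin 14) : (bigG m).Reachable (0, 0) p := by
  obtain ⟨i, v⟩ := p
  have hc : ∀ i : Fin (m + 3), (bigG m).Reachable (0, 0) (i, 0) := by
    intro i
    induction i using Fin.induction with
    | zero => exact SimpleGraph.Reachable.refl _
    | succ i ih =>
      refine ih.trans (SimpleGraph.Adj.reachable ?_)
      exact Or.inr ⟨rfl, rfl, Or.inl (by simp)⟩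
  have st : ∀ a b, hAdj a b = true → (bigG m).Reachable (i, a) (i, b) := fun a b h =>
    SimpleGraph.Adj.reachable (Or.inl ⟨rfl, h⟩)
  refine (hc i).trans ?_
  rcases hAdj_conn v with rfl | h | ⟨a, h1, h2⟩ | ⟨a, b, h1, h2, h3⟩
  · exact SimpleGraph.Reachable.refl _
  · exact st _ _ h
  · exact (st _ _ h1).trans (st _ _ h2)
  · exact ((st _ _ h1).trans (st _ _ h2)).trans (st _ _ h3)

lemma card_le_two_sub (T : Finset (Fin 14)) (h : T.card ≤ 2) : ∃ x y, T ⊆ {x, y} := by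
  rcases Nat.lt_or_ge T.card 2 with h1 | h1
  · obtain ⟨x, hx⟩ := Finset.card_le_one_iff_subset_singleton.1 (Nat.lt_succ_iff.1 h1)
    exact ⟨x, x, by simpa using hx⟩
  · obtain ⟨x, y, -, rfl⟩ := Finset.card_eq_two.1 (le_antisymm h h1)
    exact ⟨x, y, subset_rfl⟩

lemma bigG_iso (m : ℕ) (S : Finset (Fin (m + 3) × Fin 14))
    (hS : IsIsolatingSet (bigG m) (S : Set _)) : 3 * (m + 3) ≤ S.card := by
  rw [Finset.card_eq_sum_card_fiberwise (f := Prod.fst) (t := Finset.univ) (by simp)]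
  have key : ∀ i : Fin (m + 3), 3 ≤ (S.filter (fun p => p.1 = i)).card := by
    intro i
    by_contra hlt
    obtain ⟨x, y, hxy⟩ := card_le_two_sub ((S.filter (fun p => p.1 = i)).image Prod.snd)
      (Finset.card_image_le.trans (by omega))
    obtain ⟨u, v, hu, hv, huv, h1, h2, h3, h4, h5, h6, h7, h8⟩ := hAdj_key x y
    have aux : ∀ w : Fin 14, w ≠ 0 → w ≠ x → w ≠ y → hAdj x w = false → hAdj y w = false →
        (i, w) ∉ closedNbhd (bigG m) (S : Set _) := by
      intro w w0 wx wy hx hy hw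
      have mem : ∀ z, (i, z) ∈ S → z = x ∨ z = y := by
        intro z hz
        have := hxy (Finset.mem_image.2 ⟨(i, z), Finset.mem_filter.2 ⟨hz, rfl⟩, rfl⟩)
        simpa using this
      rcases hw with hw | ⟨⟨j, z⟩, hz, ⟨e1, e2⟩ | ⟨e1, e2, e3⟩⟩
      · rcases mem w hw with h | h
        · exact wx h
        · exact wy h
      · simp only at e1 e2
        subst e1
        rcases mem z hz with rfl | rfl
        · simp [hx] at e2
        · simp [hy] at e2
      · exact w0 e2
    rcases hS (i, u) (i, v) (Or.inl ⟨rfl, huv⟩) with h | h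
    · exact aux u hu h1 h2 h5 h6 h
    · exact aux v hv h3 h4 h7 h8 h
  calc 3 * (m + 3) = ∑ _i : Fin (m + 3), 3 := by simp [mul_comm]
    _ ≤ _ := Finset.sum_le_sum fun i _ => key i

/-- There are arbitrarily large connected 5-regular graphs with isolation number
at least `3/14` of their order. -/
theorem exists_five_regular_isolation_ge (N : ℕ) (hN : 0 < N) :
    ∃ (n : ℕ) (G : SimpleGraph (Fin n)), N ≤ n ∧ G.Connected ∧
      (∀ v : Fin n, (G.neighborSet v).ncard = 5) ∧
      3 * (n : ℝ) / 14 ≤ (isolationNumber G : ℝ) := by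
  let e : Fin (N + 3) × Fin 14 ≃ Fin ((N + 3) * 14) := finProdFinEquiv
  let G : SimpleGraph (Fin ((N + 3) * 14)) := (bigG N).comap e.symm
  let f : G ≃g bigG N := ⟨e.symm, Iff.rfl⟩
  refine ⟨(N + 3) * 14, G, by omega, ?_, ?_, ?_⟩
  · rw [f.connected_iff]
    exact { preconnected := fun a b => (bigG_reach N a).symm.trans (bigG_reach N b)
            nonempty := ⟨(0, 0)⟩ }
  · intro v
    rw [← bigG_deg N (f v), ← Set.ncard_image_of_injective _ f.injective]
    congr 1
    ext w
    constructor
    · rintro ⟨a, ha, rfl⟩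
      exact f.map_rel_iff.2 ha
    · intro hw
      obtain ⟨a, rfl⟩ := f.surjective w
      exact ⟨a, f.map_rel_iff.1 hw, rfl⟩
  · have hne : {k | ∃ S : Set (Fin ((N + 3) * 14)), IsIsolatingSet G S ∧ S.ncard = k}.Nonempty :=
      ⟨_, Set.univ, fun u v _ => Or.inl (Or.inl trivial), rfl⟩
    obtain ⟨S, hS, hc⟩ := Nat.sInf_mem hne
    have h1 : 3 * (N + 3) ≤ isolationNumber G := by
      unfold isolationNumber
      rw [← hc, ← Set.ncard_image_of_injective _ f.injective,
        Set.ncard_eq_toFinset_card']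
      apply bigG_iso
      rw [Set.coe_toFinset]
      have aux : ∀ a, a ∈ closedNbhd G S → f a ∈ closedNbhd (bigG N) (f '' S) := by
        rintro a (ha | ⟨b, hb, hab⟩)
        · exact Or.inl ⟨a, ha, rfl⟩
        · exact Or.inr ⟨f b, ⟨b, hb, rfl⟩, f.map_rel_iff.2 hab⟩
      intro p q hpq
      obtain ⟨a, rfl⟩ := f.surjective p
      obtain ⟨b, rfl⟩ := f.surjective q
      exact (hS a b (f.map_rel_iff.1 hpq)).imp (aux a) (aux b)
    have h2 : (3 : ℝ) * (N + 3) ≤ isolationNumber G := by exact_mod_cast h1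
    push_cast
    linarith
end
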